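/- arXiv:2511.01782 — 4 statements merged into one kernel-verified Lean document; each statement's English description precedes it below -/
import Mathlib

section
/- Let p ≥ 7 be a prime and let C be a cyclic group of order 3p. Then there is no generalized character χ of C whose values on all nonidentity elements of C are sums of at most two roots of unity and which can be written either as χ = a·ρ_C + ε·(λ₁ + λ₂ + λ₃) or as χ = a·ρ_C + ε·(λ₁ + λ₂ + λ₃ + λ₄), for some integer a, sign ε ∈ {1, −1}, and pairwise distinct irreducible characters λᵢ of C (i.e., C admits no such character of type (3,0), (0,3), (4,0), or (0,4)). -/
/-!
Restrict `χ` to an element `g` of order `p`. There the regular character vanishes and, up to sign,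
`χ g` is a sum of `k ∈ {3, 4}` complex `p`-th roots of unity; suppose that it equals `u + v`, where
each of `u`, `v` is zero or a root of unity. Raising to the `p`-th power modulo `p` in the ring of
algebraic integers gives `u ^ p + v ^ p ≡ k (mod p)`. All conjugates of `u ^ p + v ^ p - k` have
absolute value at most `k + 2 < p`, so the algebraic integer `(u ^ p + v ^ p - k) / p` has all its
conjugates in the open unit disc and is therefore zero (`sum_eq_of_congr`, by Kronecker's theorem).
Then `u ^ p + v ^ p = k ≥ 3`, which contradicts `|u ^ p + v ^ p| ≤ 2`.
-/

def IsRootOfUnity (z : ℂ) : Prop := ∃ n : ℕ, 0 < n ∧ z ^ n = 1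

def IsSumAtMostTwoRootsOfUnity (z : ℂ) : Prop :=
  z = 0 ∨ IsRootOfUnity z ∨ ∃ u v : ℂ, IsRootOfUnity u ∧ IsRootOfUnity v ∧ z = u + v

/-- A complex number that is zero or a root of unity. A sum of at most two roots of unity is exactly
a sum of two such numbers. -/
def ZeroOrRoot (z : ℂ) : Prop := z = 0 ∨ IsRootOfUnity z

lemma IsRootOfUnity.neg {z : ℂ} (h : IsRootOfUnity z) : IsRootOfUnity (-z) := by
  obtain ⟨n, hn, h⟩ := h
  exact ⟨2 * n, by omega, by rw [pow_mul, neg_sq, ← pow_mul, mul_comm, pow_mul, h, one_pow]⟩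

lemma ZeroOrRoot.neg {z : ℂ} (h : ZeroOrRoot z) : ZeroOrRoot (-z) := by
  rcases h with rfl | h
  · exact Or.inl neg_zero
  · exact Or.inr h.neg

lemma IsSumAtMostTwoRootsOfUnity.exists_add {z : ℂ} (h : IsSumAtMostTwoRootsOfUnity z) :
    ∃ u v : ℂ, ZeroOrRoot u ∧ ZeroOrRoot v ∧ z = u + v := by
  rcases h with rfl | h | ⟨u, v, hu, hv, rfl⟩
  · exact ⟨0, 0, Or.inl rfl, Or.inl rfl, by simp⟩
  · exact ⟨z, 0, Or.inr h, Or.inl rfl, by simp⟩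
  · exact ⟨u, v, Or.inr hu, Or.inr hv, rfl⟩

lemma ZeroOrRoot.isIntegral {z : ℂ} (h : ZeroOrRoot z) : IsIntegral ℤ z := by
  rcases h with rfl | ⟨n, hn, h⟩
  · exact isIntegral_zero
  · exact IsIntegral.of_pow hn (h ▸ isIntegral_one)

/-- Every conjugate of zero or of a root of unity lies in the closed unit disc. -/
lemma ZeroOrRoot.norm_map_le {K : IntermediateField ℚ ℂ} {x : K} (h : ZeroOrRoot (x : ℂ))
    (φ : K →+* ℂ) : ‖φ x‖ ≤ 1 := by
  rcases h with h | ⟨n, hn, h⟩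
  · have : x = 0 := by exact_mod_cast h
    simp [this]
  · have hx : x ^ n = 1 := by exact_mod_cast h
    have h1 : φ x ^ n = 1 := by rw [← map_pow, hx, map_one]
    exact (Complex.norm_eq_one_of_pow_eq_one h1 hn.ne').le

/-- A congruence `u ^ p + v ^ p ≡ k (mod p)` between algebraic integers with `k + 2 < p` is an
equality, because every conjugate of the difference has absolute value less than `p`. -/
lemma sum_eq_of_congr {u v w : ℂ} (hu : ZeroOrRoot u) (hv : ZeroOrRoot v) (hw : IsIntegral ℤ w)
    {p k : ℕ} (hkp : k + 2 < p) (h : u ^ p + v ^ p = k + p * w) : u ^ p + v ^ p = k := by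
  suffices hw0 : w = 0 by rw [h, hw0, mul_zero, add_zero]
  have hp0 : (p : ℂ) ≠ 0 := by exact_mod_cast (by omega : p ≠ 0)
  let K : IntermediateField ℚ ℂ := IntermediateField.adjoin ℚ {u, v}
  have : FiniteDimensional ℚ K := by
    apply IntermediateField.finiteDimensional_adjoin
    rintro x (rfl | rfl)
    · exact hu.isIntegral.tower_top
    · exact hv.isIntegral.tower_top
  have : NumberField K := ⟨⟩
  have huK : u ∈ K := IntermediateField.subset_adjoin _ _ (by simp)
  have hvK : v ∈ K := IntermediateField.subset_adjoin _ _ (by simp)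
  have hwK : w ∈ K := by
    have : w = (u ^ p + v ^ p - k) / p := by
      rw [h]; field_simp; ring
    rw [this]
    exact div_mem (sub_mem (add_mem (pow_mem huK _) (pow_mem hvK _)) (natCast_mem K k))
      (natCast_mem K p)
  let U : K := ⟨u, huK⟩
  let V : K := ⟨v, hvK⟩
  let W : K := ⟨w, hwK⟩
  have hWint : IsIntegral ℤ W :=
    (isIntegral_algHom_iff (K.val.restrictScalars ℤ) Subtype.val_injective).1 hw
  have hK : U ^ p + V ^ p = k + p * W := Subtype.ext (by simpa [U, V, W] using h)
  have hlt : ∀ φ : K →+* ℂ, ‖φ W‖ < 1 := by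
    intro φ
    have hφ : φ U ^ p + φ V ^ p = k + p * φ W := by
      simpa using congrArg φ hK
    have hU : ‖φ U ^ p‖ ≤ 1 := by
      rw [norm_pow]; exact pow_le_one₀ (norm_nonneg _) (ZeroOrRoot.norm_map_le hu φ)
    have hV : ‖φ V ^ p‖ ≤ 1 := by
      rw [norm_pow]; exact pow_le_one₀ (norm_nonneg _) (ZeroOrRoot.norm_map_le hv φ)
    have hle : (p : ℝ) * ‖φ W‖ ≤ k + 2 := by
      calc (p : ℝ) * ‖φ W‖ = ‖φ U ^ p + φ V ^ p - k‖ := by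
            rw [hφ, add_sub_cancel_left, norm_mul, Complex.norm_natCast]
        _ ≤ ‖φ U ^ p‖ + ‖φ V ^ p‖ + ‖(k : ℂ)‖ :=
            (norm_sub_le _ _).trans (by gcongr; exact norm_add_le _ _)
        _ ≤ k + 2 := by rw [Complex.norm_natCast]; linarith
    have hkp' : (k : ℝ) + 2 < p := by exact_mod_cast hkp
    by_contra! hge
    nlinarith
  -- By Kronecker's theorem a nonzero `W` would be a root of unity, of absolute value one.
  by_contra hw0
  have hW0 : W ≠ 0 := fun h0 => hw0 (congrArg Subtype.val h0)
  obtain ⟨n, hn, hpow⟩ := NumberField.Embeddings.pow_eq_one_of_norm_le_one K ℂ hW0 hWint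
    (fun φ => (hlt φ).le)
  have h1 : K.val.toRingHom W ^ n = 1 := by rw [← map_pow, hpow, map_one]
  exact absurd (Complex.norm_eq_one_of_pow_eq_one h1 hn.ne') (hlt _).ne

/-- The `p`-th power map is additive modulo `p` on finite sums. -/
lemma exists_sum_pow_prime_eq {R ι : Type*} [CommRing R] {p : ℕ} (hp : p.Prime) (s : Finset ι)
    (f : ι → R) : ∃ r, (∑ i ∈ s, f i) ^ p = ∑ i ∈ s, f i ^ p + p * r := by
  classical
  induction s using Finset.induction_on with
  | empty => exact ⟨0, by simp [hp.ne_zero]⟩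
  | insert a s ha ih =>
    obtain ⟨r, hr⟩ := ih
    obtain ⟨t, ht⟩ := exists_add_pow_prime_eq hp (f a) (∑ i ∈ s, f i)
    refine ⟨r + f a * (∑ i ∈ s, f i) * t, ?_⟩
    rw [Finset.sum_insert ha, Finset.sum_insert ha, ht, hr]
    ring

/-- A sum of `k` complex `p`-th roots of unity, with repetitions allowed and `3 ≤ k < p - 2`, is not
a sum of at most two roots of unity. -/
lemma sum_ne_add {p k : ℕ} (hp : p.Prime) (hk : 3 ≤ k) (hkp : k + 2 < p) (x : Fin k → ℂ)
    (hx : ∀ i, x i ^ p = 1) {u v : ℂ} (hu : ZeroOrRoot u) (hv : ZeroOrRoot v) :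
    ∑ i, x i ≠ u + v := by
  intro h
  let R := integralClosure ℤ ℂ
  let X : Fin k → R := fun i => ⟨x i, IsIntegral.of_pow hp.pos ((hx i).symm ▸ isIntegral_one)⟩
  let U : R := ⟨u, hu.isIntegral⟩
  let V : R := ⟨v, hv.isIntegral⟩
  have hX : ∑ i, X i = U + V := Subtype.ext (by simpa [X, U, V] using h)
  have hXp : ∀ i, X i ^ p = 1 := fun i => Subtype.ext (by simpa [X] using hx i)
  obtain ⟨r, hr⟩ := exists_sum_pow_prime_eq hp Finset.univ X
  obtain ⟨t, ht⟩ := exists_add_pow_prime_eq hp U V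
  have hmod : U ^ p + V ^ p = k + p * (r - U * V * t) := by
    rw [hX, ht] at hr
    simp only [hXp, Finset.sum_const, Finset.card_univ, Fintype.card_fin, nsmul_eq_mul,
      mul_one] at hr
    linear_combination hr
  have hC : u ^ p + v ^ p = k + p * ((r - U * V * t : R) : ℂ) := by
    simpa [U, V] using congrArg (Subtype.val : R → ℂ) hmod
  have heq := sum_eq_of_congr hu hv (r - U * V * t : R).2 hkp hC
  have hbound : ∀ {z : ℂ}, ZeroOrRoot z → ‖z ^ p‖ ≤ 1 := by
    rintro z (rfl | ⟨n, hn, hz⟩)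
    · simp [hp.ne_zero]
    · rw [norm_pow, Complex.norm_eq_one_of_pow_eq_one hz hn.ne', one_pow]
  have hnorm : (k : ℝ) ≤ 2 := by
    calc (k : ℝ) = ‖u ^ p + v ^ p‖ := by rw [heq, Complex.norm_natCast]
      _ ≤ ‖u ^ p‖ + ‖v ^ p‖ := norm_add_le _ _
      _ ≤ 2 := by linarith [hbound hu, hbound hv]
  have : k ≤ 2 := by exact_mod_cast hnorm
  omega

theorem stmt_13 {C : Type*} [CommGroup C] [Fintype C] [DecidableEq C] [IsCyclic C]
    (p : ℕ) (hp : p.Prime) (hp7 : 7 ≤ p) (hcard : Fintype.card C = 3 * p) :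
    ¬ ∃ χ : C → ℂ,
        (∀ x : C, x ≠ 1 → IsSumAtMostTwoRootsOfUnity (χ x)) ∧
        ((∃ (a ε : ℤ) (lam : Fin 3 → (C →* ℂˣ)),
            (ε = 1 ∨ ε = -1) ∧ Function.Injective lam ∧
            ∀ g : C, χ g = (a : ℂ) * (if g = 1 then (Fintype.card C : ℂ) else 0)
              + (ε : ℂ) * ∑ i : Fin 3, (lam i g : ℂ)) ∨
         (∃ (a ε : ℤ) (lam : Fin 4 → (C →* ℂˣ)),
            (ε = 1 ∨ ε = -1) ∧ Function.Injective lam ∧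
            ∀ g : C, χ g = (a : ℂ) * (if g = 1 then (Fintype.card C : ℂ) else 0)
              + (ε : ℂ) * ∑ i : Fin 4, (lam i g : ℂ))) := by
  rintro ⟨χ, hχ, h⟩
  have : Fact p.Prime := ⟨hp⟩
  obtain ⟨g, hg⟩ := exists_prime_orderOf_dvd_card (G := C) p (hcard ▸ dvd_mul_left p 3)
  have hg1 : g ≠ 1 := by
    rintro rfl
    rw [orderOf_one] at hg
    omega
  obtain ⟨u, v, hu, hv, huv⟩ := (hχ g hg1).exists_add
  have key : ∀ {k : ℕ}, 3 ≤ k → k + 2 < p → ∀ (a ε : ℤ) (lam : Fin k → (C →* ℂˣ)),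
      (ε = 1 ∨ ε = -1) → χ g = (a : ℂ) * (if g = 1 then (Fintype.card C : ℂ) else 0)
        + (ε : ℂ) * ∑ i, (lam i g : ℂ) → False := by
    intro k hk hkp a ε lam hε hval
    have hroot : ∀ i, (lam i g : ℂ) ^ p = 1 := by
      intro i
      rw [← Units.val_pow_eq_pow_val, ← map_pow, ← hg, pow_orderOf_eq_one, map_one, Units.val_one]
    rw [if_neg hg1, mul_zero, zero_add, huv] at hval
    rcases hε with rfl | rfl
    · exact sum_ne_add hp hk hkp _ hroot hu hv (by simpa using hval.symm)
    · refine sum_ne_add hp hk hkp _ hroot hu.neg hv.neg ?_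
      push_cast at hval
      linear_combination hval
  rcases h with ⟨a, ε, lam, hε, -, hval⟩ | ⟨a, ε, lam, hε, -, hval⟩
  · exact key (by norm_num) (by omega) a ε lam hε (hval g)
  · exact key (by norm_num) (by omega) a ε lam hε (hval g)
end

section
/- Let C be a cyclic group of order 15. Then there is no generalized character χ of C whose values on all nonidentity elements of C are sums of at most two roots of unity and which can be written either as χ = a·ρ_C + ε·(λ₁ + ⋯ + λ₅) or as χ = a·ρ_C + ε·(λ₁ + ⋯ + λ₆), for some integer a, sign ε ∈ {1, −1}, and pairwise distinct irreducible characters λᵢ of C (i.e., C admits no such character of type (5,0), (0,5), (6,0), or (0,6)). -/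
open Polynomial

namespace Cyclic15

/-- The value at `z` of the sum of the characters with exponents in `S`. -/
noncomputable def expSum (S : Finset (Fin 15)) (z : ℂ) : ℂ := ∑ s ∈ S, z ^ (s : ℕ)

/-- The number of pairs in `S × S` that are congruent modulo `n`. -/
def congPairs (S : Finset (Fin 15)) (n : ℕ) : ℕ :=
  ((S ×ˢ S).filter fun p => (p.1 : ℕ) % n = (p.2 : ℕ) % n).card

/-! ### Orthogonality and Parseval -/

lemma sum_nthRoots_eq {n : ℕ} (hn : 0 < n) {ζ : ℂ} (hζ : IsPrimitiveRoot ζ n) (h : ℂ → ℂ) :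
    ∑ z ∈ nthRootsFinset n (1 : ℂ), h z = ∑ t ∈ Finset.range n, h (ζ ^ t) := by
  have : NeZero n := ⟨hn.ne'⟩
  symm
  refine Finset.sum_bij (fun t _ => ζ ^ t) ?_ ?_ ?_ ?_
  · intro t _
    rw [mem_nthRootsFinset hn, ← pow_mul, mul_comm, pow_mul, hζ.pow_eq_one, one_pow]
  · intro a ha b hb hab
    exact hζ.pow_inj (Finset.mem_range.1 ha) (Finset.mem_range.1 hb) hab
  · intro z hz
    rw [mem_nthRootsFinset hn] at hz
    obtain ⟨i, hi, h⟩ := hζ.eq_pow_of_pow_eq_one hz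
    exact ⟨i, Finset.mem_range.2 hi, h⟩
  · simp

lemma sum_zpow {n : ℕ} (hn : 0 < n) (m : ℤ) :
    ∑ z ∈ nthRootsFinset n (1 : ℂ), z ^ m = if (n : ℤ) ∣ m then (n : ℂ) else 0 := by
  have hζ := Complex.isPrimitiveRoot_exp n hn.ne'
  set ζ := Complex.exp (2 * Real.pi * Complex.I / n)
  rw [sum_nthRoots_eq hn hζ]
  have e : ∀ t : ℕ, (ζ ^ t) ^ m = (ζ ^ m) ^ t := fun t => by
    rw [← zpow_natCast, ← zpow_mul, mul_comm, zpow_mul, zpow_natCast]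
  simp_rw [e]
  split_ifs with h
  · rw [(hζ.zpow_eq_one_iff_dvd m).2 h]; simp
  · have h1 : ζ ^ m ≠ 1 := fun h1 => h ((hζ.zpow_eq_one_iff_dvd m).1 h1)
    rw [geom_sum_eq h1, ← e n, hζ.pow_eq_one]; simp

lemma conj_root {n : ℕ} (hn : 0 < n) {z : ℂ} (hz : z ^ n = 1) :
    (starRingEnd ℂ) z = z⁻¹ := by
  rw [Complex.inv_def, Complex.normSq_eq_norm_sq,
    Complex.norm_eq_one_of_pow_eq_one hz hn.ne']; simp

lemma normSq_expSum (S : Finset (Fin 15)) {n : ℕ} (hn : 0 < n) {z : ℂ} (hz : z ^ n = 1) :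
    ((‖expSum S z‖ ^ 2 : ℝ) : ℂ) = expSum S z * ∑ s ∈ S, z⁻¹ ^ (s : ℕ) := by
  push_cast
  rw [← Complex.mul_conj', expSum, map_sum]
  simp [conj_root hn hz]

lemma parseval (S : Finset (Fin 15)) {n : ℕ} (hn : 0 < n) :
    ∑ z ∈ nthRootsFinset n (1 : ℂ), ‖expSum S z‖ ^ 2 = n * congPairs S n := by
  have : ((∑ z ∈ nthRootsFinset n (1 : ℂ), ‖expSum S z‖ ^ 2 : ℝ) : ℂ)
      = n * congPairs S n := by
    have h1 : ∀ z ∈ nthRootsFinset n (1 : ℂ), ((‖expSum S z‖ ^ 2 : ℝ) : ℂ)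
        = ∑ p ∈ S ×ˢ S, z ^ (((p.1 : ℕ) : ℤ) - ((p.2 : ℕ) : ℤ)) := by
      intro z hz
      rw [mem_nthRootsFinset hn] at hz
      have hz0 : z ≠ 0 := by
        rintro rfl
        simp [hn.ne'] at hz
      rw [normSq_expSum S hn hz, expSum, Finset.sum_mul_sum, Finset.sum_product]
      refine Finset.sum_congr rfl fun a _ => Finset.sum_congr rfl fun b _ => ?_
      rw [zpow_sub₀ hz0, zpow_natCast, zpow_natCast, inv_pow, div_eq_mul_inv]
    rw [Complex.ofReal_sum, Finset.sum_congr rfl h1, Finset.sum_comm]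
    simp_rw [sum_zpow hn]
    rw [← Finset.sum_filter, Finset.sum_const, nsmul_eq_mul, mul_comm, congPairs]
    congr 3
    refine Finset.filter_congr fun p _ => ?_
    rw [← Nat.modEq_iff_dvd, Nat.ModEq]
    exact eq_comm
  exact_mod_cast this

lemma expSum_one (S : Finset (Fin 15)) : expSum S 1 = S.card := by simp [expSum]

lemma congPairs_fifteen (S : Finset (Fin 15)) : congPairs S 15 = S.card := by
  have : (S ×ˢ S).filter (fun p => (p.1 : ℕ) % 15 = (p.2 : ℕ) % 15)
      = S.image fun s => (s, s) := by
    ext ⟨a, b⟩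
    simp only [Finset.mem_filter, Finset.mem_product, Finset.mem_image, Prod.mk.injEq,
      Nat.mod_eq_of_lt a.2, Nat.mod_eq_of_lt b.2, ← Fin.ext_iff]
    constructor
    · rintro ⟨⟨h, _⟩, rfl⟩
      exact ⟨a, h, rfl, rfl⟩
    · rintro ⟨c, h, rfl, rfl⟩
      exact ⟨⟨h, h⟩, rfl⟩
  rw [congPairs, this, Finset.card_image_of_injective]
  intro a b h
  simpa using h

/-- If all nontrivial values at `n`-th roots of unity are at most `2` in absolute value, Parseval
bounds the number of congruent pairs modulo `n`. -/
lemma congPairs_le (S : Finset (Fin 15)) {n : ℕ} (hn : 0 < n)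
    (hS : ∀ z : ℂ, z ^ n = 1 → z ≠ 1 → ‖expSum S z‖ ≤ 2) :
    n * congPairs S n ≤ S.card ^ 2 + 4 * (n - 1) := by
  have h := parseval S hn
  have h1 : (1 : ℂ) ∈ nthRootsFinset n (1 : ℂ) := by simp [mem_nthRootsFinset hn]
  rw [← Finset.add_sum_erase _ _ h1, expSum_one] at h
  have hc : ((nthRootsFinset n (1 : ℂ)).erase 1).card = n - 1 := by
    rw [Finset.card_erase_of_mem h1,
      (Complex.isPrimitiveRoot_exp n hn.ne').card_nthRootsFinset]
  have h2 : ∑ z ∈ (nthRootsFinset n (1 : ℂ)).erase 1, ‖expSum S z‖ ^ 2 ≤ (n - 1 : ℕ) * 4 := by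
    rw [← hc, ← nsmul_eq_mul]
    refine Finset.sum_le_card_nsmul _ _ _ fun z hz => ?_
    rw [Finset.mem_erase, mem_nthRootsFinset hn] at hz
    nlinarith [hS z hz.2 hz.1, norm_nonneg (expSum S z)]
  have h3 : ((n * congPairs S n : ℕ) : ℝ) ≤ ((S.card ^ 2 + 4 * (n - 1) : ℕ) : ℝ) := by
    push_cast
    simp only [Complex.norm_natCast] at h
    linarith
  exact_mod_cast h3

/-! ### The values at primitive roots -/

/-- An integer polynomial whose value at a 15th root of unity `z` is `4 - |F(z)|²`. -/
noncomputable def defectPoly (S : Finset (Fin 15)) : ℤ[X] :=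
  4 - (∑ s ∈ S, X ^ (s : ℕ)) * ∑ s ∈ S, X ^ (14 * (s : ℕ))

lemma aeval_defectPoly (S : Finset (Fin 15)) {z : ℂ} (hz : z ^ 15 = 1) :
    aeval z (defectPoly S) = ((4 - ‖expSum S z‖ ^ 2 : ℝ) : ℂ) := by
  have hz0 : z ≠ 0 := by
    rintro rfl
    norm_num at hz
  have hi : z⁻¹ = z ^ 14 := by
    field_simp
    exact hz.symm
  rw [Complex.ofReal_sub, normSq_expSum S (by norm_num : 0 < 15) hz, hi]
  have h4 : aeval z (4 : ℤ[X]) = 4 := map_ofNat _ 4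
  simp [defectPoly, expSum, pow_mul, h4]

lemma prod_aeval_int (Q : ℤ[X]) :
    ∃ m : ℤ, ∏ z ∈ primitiveRoots 15 ℂ, aeval z Q = m := by
  refine ⟨resultant (cyclotomic 15 ℤ) Q, ?_⟩
  have hs : (cyclotomic 15 ℂ).Splits := IsAlgClosed.splits _
  have h := resultant_eq_prod_eval (cyclotomic 15 ℂ) (Q.map (Int.castRingHom ℂ)) Q.natDegree
    natDegree_map_le hs
  rw [cyclotomic.roots_eq_primitiveRoots_val, (cyclotomic.monic 15 ℂ).leadingCoeff, one_pow,
    one_mul] at h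
  have h2 := resultant_map_map (cyclotomic 15 ℤ) Q (cyclotomic 15 ℤ).natDegree Q.natDegree
    (Int.castRingHom ℂ)
  rw [map_cyclotomic, natDegree_cyclotomic, ← natDegree_cyclotomic 15 ℂ, h] at h2
  rw [natDegree_cyclotomic] at h2
  rw [natDegree_cyclotomic]
  rw [eq_intCast] at h2
  rw [← h2, Finset.prod]
  refine congrArg Multiset.prod (Multiset.map_congr rfl fun z _ => ?_)
  rw [eval_map, aeval_def]
  rfl

variable {S : Finset (Fin 15)}

/-- The conjugate numbers `4 - |F(z)|²` have sum at most `6`, too small for a product of eight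
nonnegative numbers to be a positive integer. -/
lemma prod_primitive_eq_zero (hc : S.card = 5 ∨ S.card = 6)
    (hS : ∀ z : ℂ, z ^ 15 = 1 → z ≠ 1 → ‖expSum S z‖ ≤ 2) :
    ∏ z ∈ primitiveRoots 15 ℂ, aeval z (defectPoly S) = 0 := by
  obtain ⟨m, hm⟩ := prod_aeval_int (defectPoly S)
  have hprim : ∀ z ∈ primitiveRoots 15 ℂ, z ^ 15 = 1 ∧ z ≠ 1 := fun z hz => by
    rw [mem_primitiveRoots (by norm_num)] at hz
    exact ⟨hz.pow_eq_one, hz.ne_one (by norm_num)⟩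
  have hnn : ∀ z : ℂ, z ^ 15 = 1 → z ≠ 1 → 0 ≤ 4 - ‖expSum S z‖ ^ 2 := fun z h1 h2 => by
    nlinarith [hS z h1 h2, norm_nonneg (expSum S z)]
  have hm' : ∏ z ∈ primitiveRoots 15 ℂ, (4 - ‖expSum S z‖ ^ 2) = (m : ℝ) := by
    rw [Finset.prod_congr rfl fun z hz => aeval_defectPoly S (hprim z hz).1] at hm
    exact_mod_cast hm
  have h1 : (1 : ℂ) ∈ nthRootsFinset 15 (1 : ℂ) := by simp [mem_nthRootsFinset]
  have hsum : ∑ z ∈ (nthRootsFinset 15 (1 : ℂ)).erase 1, (4 - ‖expSum S z‖ ^ 2) ≤ 6 := by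
    have h := parseval S (by norm_num : 0 < 15)
    rw [← Finset.add_sum_erase _ _ h1, expSum_one, congPairs_fifteen] at h
    rw [Finset.sum_sub_distrib, Finset.sum_const, Finset.card_erase_of_mem h1,
      (Complex.isPrimitiveRoot_exp 15 (by norm_num)).card_nthRootsFinset]
    simp only [Complex.norm_natCast] at h
    rcases hc with hc | hc <;> rw [hc] at h <;> norm_num at h ⊢ <;> linarith
  have hsum' : ∑ z ∈ primitiveRoots 15 ℂ, (4 - ‖expSum S z‖ ^ 2) ≤ 6 := by
    refine le_trans (Finset.sum_le_sum_of_subset_of_nonneg ?_ ?_) hsum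
    · intro z hz
      rw [Finset.mem_erase, mem_nthRootsFinset (by norm_num)]
      exact (hprim z hz).symm
    · intro z hz _
      rw [Finset.mem_erase, mem_nthRootsFinset (by norm_num)] at hz
      exact hnn z hz.2 hz.1
  have hcard : (primitiveRoots 15 ℂ).card = 8 := by
    rw [Complex.card_primitiveRoots]; decide
  -- AM-GM in the form `t ≤ exp (t - 1)`
  have hlt : (m : ℝ) < 1 := by
    rw [← hm']
    calc ∏ z ∈ primitiveRoots 15 ℂ, (4 - ‖expSum S z‖ ^ 2)
        ≤ ∏ z ∈ primitiveRoots 15 ℂ, Real.exp ((4 - ‖expSum S z‖ ^ 2) - 1) := by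
          refine Finset.prod_le_prod (fun z hz => hnn z (hprim z hz).1 (hprim z hz).2)
            fun z _ => ?_
          linarith [Real.add_one_le_exp ((4 - ‖expSum S z‖ ^ 2) - 1)]
      _ < 1 := by
          rw [← Real.exp_sum, Real.exp_lt_one_iff, Finset.sum_sub_distrib, Finset.sum_const, hcard,
            nsmul_eq_mul]
          push_cast
          linarith
  have hge : (0 : ℝ) ≤ m := by
    rw [← hm']
    exact Finset.prod_nonneg fun z hz => hnn z (hprim z hz).1 (hprim z hz).2
  have : m = 0 := by
    have a : m < 1 := by exact_mod_cast hlt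
    have b : 0 ≤ m := by exact_mod_cast hge
    omega
  rw [hm, this]; simp

lemma norm_eq_two (hc : S.card = 5 ∨ S.card = 6)
    (hS : ∀ z : ℂ, z ^ 15 = 1 → z ≠ 1 → ‖expSum S z‖ ≤ 2) {z : ℂ}
    (hz : IsPrimitiveRoot z 15) : ‖expSum S z‖ = 2 := by
  obtain ⟨w, hw, h0⟩ := Finset.prod_eq_zero_iff.1 (prod_primitive_eq_zero hc hS)
  rw [mem_primitiveRoots (by norm_num)] at hw
  -- all primitive roots share a minimal polynomial, so one zero among them gives all
  have hdvd : cyclotomic 15 ℤ ∣ defectPoly S := by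
    rw [cyclotomic_eq_minpoly hw (by norm_num)]
    exact minpoly.isIntegrallyClosed_dvd (hw.isIntegral (by norm_num)) h0
  have hz0 : aeval z (defectPoly S) = 0 := by
    rw [cyclotomic_eq_minpoly hz (by norm_num)] at hdvd
    obtain ⟨q, hq⟩ := hdvd
    rw [hq, map_mul, minpoly.aeval, zero_mul]
  rw [aeval_defectPoly S hz.pow_eq_one] at hz0
  have h4 : 4 - ‖expSum S z‖ ^ 2 = 0 := by exact_mod_cast hz0
  nlinarith [norm_nonneg (expSum S z)]

/-! ### Parity on the grid -/

/-- The element of `ℤ/15` congruent to `i` modulo `3` and to `j` modulo `5`. -/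
def gridPt (i : Fin 3) (j : Fin 5) : Fin 15 := Fin.ofNat 15 (10 * i + 6 * j)

/-- The indicator of `S`, with integer values. -/
def ind (S : Finset (Fin 15)) (s : Fin 15) : ℤ := if s ∈ S then 1 else 0

/-- Fourier inversion. -/
lemma sum_expSum_mul (S : Finset (Fin 15)) (q : Fin 15) (e : ℕ) (he : (e + q) % 15 = 0) :
    ∑ z ∈ nthRootsFinset 15 (1 : ℂ), expSum S z * z ^ e = 15 * (ind S q : ℂ) := by
  simp_rw [expSum, Finset.sum_mul, ← pow_add]
  rw [Finset.sum_comm]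
  have h : ∀ s : Fin 15, ∑ z ∈ nthRootsFinset 15 (1 : ℂ), z ^ ((s : ℕ) + e)
      = if s = q then 15 else 0 := by
    intro s
    have := sum_zpow (by norm_num : 0 < 15) (((s : ℕ) + e : ℕ) : ℤ)
    simp only [zpow_natCast] at this
    rw [this]
    have hiff : (((15 : ℕ) : ℤ) ∣ (((s : ℕ) + e : ℕ) : ℤ)) ↔ s = q := by
      rw [Fin.ext_iff]
      have := s.2
      have := q.2
      omega
    rw [if_congr hiff rfl rfl]; rfl
  simp_rw [h]
  rw [Finset.sum_ite_eq']
  simp [ind]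

lemma even_of_isIntegral {m : ℤ} (h : IsIntegral ℤ ((15 * m : ℂ) / 2)) : Even m := by
  have h' : IsIntegral ℤ ((15 * m : ℚ) / 2) := by
    rw [← isIntegral_algebraMap_iff (algebraMap ℚ ℂ).injective]
    simpa using h
  obtain ⟨k, hk⟩ := IsIntegrallyClosed.isIntegral_iff.1 h'
  have : 15 * m = 2 * k := by
    have : (15 * m : ℚ) = 2 * k := by
      rw [eq_intCast] at hk
      rw [hk]; ring
    exact_mod_cast this
  rw [Int.even_iff]; omega

lemma rectangle_even
    (hS : ∀ z : ℂ, IsPrimitiveRoot z 15 → IsIntegral ℤ (expSum S z / 2))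
    (i : Fin 3) (j : Fin 5) :
    Even (ind S (gridPt i j) - ind S (gridPt i 0) - ind S (gridPt 0 j) + ind S (gridPt 0 0)) := by
  apply even_of_isIntegral
  have hij := sum_expSum_mul S (gridPt i j) (5 * i + 9 * j) (by
    revert i j; decide)
  have hi := sum_expSum_mul S (gridPt i 0) (5 * i) (by
    clear hij; revert i; decide)
  have hj := sum_expSum_mul S (gridPt 0 j) (9 * j) (by
    clear hij; revert j; decide)
  have h0 := sum_expSum_mul S (gridPt 0 0) 0 (by decide)
  have key : ((15 * ((ind S (gridPt i j) - ind S (gridPt i 0) - ind S (gridPt 0 j)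
      + ind S (gridPt 0 0) : ℤ) : ℂ)) / 2)
      = ∑ z ∈ nthRootsFinset 15 (1 : ℂ),
        expSum S z / 2 * ((z ^ (5 * (i : ℕ)) - 1) * (z ^ (9 * (j : ℕ)) - 1)) := by
    push_cast
    rw [mul_add, mul_sub, mul_sub, ← hij, ← hi, ← hj, ← h0, ← Finset.sum_sub_distrib,
      ← Finset.sum_sub_distrib, ← Finset.sum_add_distrib, Finset.sum_div]
    refine Finset.sum_congr rfl fun z _ => ?_
    rw [pow_add]
    ring
  rw [key]
  refine IsIntegral.sum _ fun z hz => ?_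
  rw [mem_nthRootsFinset (by norm_num)] at hz
  have hzi : IsIntegral ℤ z := IsIntegral.of_pow (by norm_num : 0 < 15) (hz ▸ isIntegral_one)
  -- the two factors vanish at roots of order dividing `5` and `3` respectively
  by_cases h5 : z ^ 5 = 1
  · simp [pow_mul, h5, isIntegral_zero]
  by_cases h3 : z ^ 3 = 1
  · have : z ^ 9 = 1 := by rw [show 9 = 3 * 3 from rfl, pow_mul, h3, one_pow]
    simp [pow_mul, this, isIntegral_zero]
  have hp : IsPrimitiveRoot z 15 := by
    have hd : orderOf z ∣ 15 := orderOf_dvd_of_pow_eq_one hz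
    have h5' : ¬ orderOf z ∣ 5 := fun h => h5 (orderOf_dvd_iff_pow_eq_one.1 h)
    have h3' : ¬ orderOf z ∣ 3 := fun h => h3 (orderOf_dvd_iff_pow_eq_one.1 h)
    have : orderOf z = 15 := by
      have hle := Nat.le_of_dvd (by norm_num) hd
      generalize orderOf z = o at *
      interval_cases o <;> simp_all
    rw [← this]
    exact IsPrimitiveRoot.orderOf z
  exact (hS z hp).mul (((hzi.pow _).sub isIntegral_one).mul ((hzi.pow _).sub isIntegral_one))

/-- The set whose indicator is, modulo `2`, the sum of `r (s mod 3)` and `q (s mod 5)`. -/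
def gridSet (r : Fin 3 → Bool) (q : Fin 5 → Bool) : Finset (Fin 15) :=
  Finset.univ.filter fun s => (r (Fin.ofNat 3 s) ^^ q (Fin.ofNat 5 s)) = true

lemma no_grid_pattern : ∀ (r : Fin 3 → Bool) (q : Fin 5 → Bool),
    ((gridSet r q).card = 5 ∨ (gridSet r q).card = 6) →
    3 * congPairs (gridSet r q) 3 ≤ (gridSet r q).card ^ 2 + 4 * (3 - 1) →
    ¬ 5 * congPairs (gridSet r q) 5 ≤ (gridSet r q).card ^ 2 + 4 * (5 - 1) := by
  decide +kernel

lemma core (hc : S.card = 5 ∨ S.card = 6)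
    (hS : ∀ z : ℂ, z ^ 15 = 1 → z ≠ 1 → ‖expSum S z‖ ≤ 2)
    (hI : ∀ z : ℂ, z ^ 15 = 1 → z ≠ 1 → ‖expSum S z‖ = 2 → IsIntegral ℤ (expSum S z / 2)) :
    False := by
  have hpar := rectangle_even (S := S) fun z hz =>
    hI z hz.pow_eq_one (hz.ne_one (by norm_num)) (norm_eq_two hc hS hz)
  have hgrid : S = gridSet (fun i => decide (gridPt i 0 ∈ S))
      (fun j => decide (gridPt 0 j ∈ S) ^^ decide (gridPt 0 0 ∈ S)) := by
    ext s
    have h := hpar (Fin.ofNat 3 s) (Fin.ofNat 5 s)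
    have hs : gridPt (Fin.ofNat 3 s) (Fin.ofNat 5 s) = s := by clear h; revert s; decide
    rw [hs] at h
    simp only [gridSet, Finset.mem_filter, Finset.mem_univ, true_and]
    unfold ind at h
    by_cases a : s ∈ S <;> by_cases b : gridPt (Fin.ofNat 3 s) 0 ∈ S <;>
      by_cases c : gridPt 0 (Fin.ofNat 5 s) ∈ S <;> by_cases d : gridPt 0 0 ∈ S <;>
      simp only [a, b, c, d, if_true, if_false] at h ⊢ <;> revert h <;> decide
  have h3 := congPairs_le S (by norm_num : 0 < 3) fun z hz hz1 =>
    hS z (by rw [show 15 = 3 * 5 from rfl, pow_mul, hz, one_pow]) hz1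
  have h5 := congPairs_le S (by norm_num : 0 < 5) fun z hz hz1 =>
    hS z (by rw [show 15 = 5 * 3 from rfl, pow_mul, hz, one_pow]) hz1
  rw [hgrid] at hc h3 h5
  exact no_grid_pattern _ _ hc h3 h5

/-! ### Sums of two roots of unity -/

lemma norm_root {u : ℂ} (hu : IsRootOfUnity u) : ‖u‖ = 1 := by
  obtain ⟨n, hn, h⟩ := hu
  exact Complex.norm_eq_one_of_pow_eq_one h hn.ne'

lemma norm_le_two {z : ℂ} (hz : IsSumAtMostTwoRootsOfUnity z) : ‖z‖ ≤ 2 := by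
  rcases hz with rfl | h | ⟨u, v, hu, hv, rfl⟩
  · simp
  · rw [norm_root h]; norm_num
  · have := norm_add_le u v
    rw [norm_root hu, norm_root hv] at this
    linarith

/-- The equality case of the triangle inequality forces both roots of unity to agree. -/
lemma isIntegral_half {z : ℂ} (hz : IsSumAtMostTwoRootsOfUnity z) (h2 : ‖z‖ = 2) :
    IsIntegral ℤ (z / 2) := by
  rcases hz with rfl | h | ⟨u, v, hu, hv, rfl⟩
  · simp at h2
  · rw [norm_root h] at h2; norm_num at h2
  · have huv : u = v := by
      apply eq_of_norm_eq_of_norm_add_eq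
      · rw [norm_root hu, norm_root hv]
      · rw [norm_root hu, norm_root hv, h2]; norm_num
    subst huv
    obtain ⟨n, hn, h⟩ := hu
    rw [show (u + u) / 2 = u by ring]
    exact IsIntegral.of_pow hn (h ▸ isIntegral_one)

/-- Passage from characters of a cyclic group of order 15 to sets of exponents. -/
lemma no_char {C : Type*} [CommGroup C] [Fintype C] [DecidableEq C] [IsCyclic C]
    (hcard : Fintype.card C = 15) {k : ℕ} (hk : k = 5 ∨ k = 6) (χ : C → ℂ)
    (hχ : ∀ x : C, x ≠ 1 → IsSumAtMostTwoRootsOfUnity (χ x))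
    (a ε : ℤ) (lam : Fin k → (C →* ℂˣ)) (hε : ε = 1 ∨ ε = -1)
    (hinj : Function.Injective lam)
    (h : ∀ g : C, χ g = (a : ℂ) * (if g = 1 then (Fintype.card C : ℂ) else 0)
      + (ε : ℂ) * ∑ i : Fin k, (lam i g : ℂ)) : False := by
  obtain ⟨g, hg⟩ := IsCyclic.exists_generator (α := C)
  have hord : orderOf g = 15 := by
    rw [orderOf_eq_card_of_forall_mem_zpowers hg, Nat.card_eq_fintype_card, hcard]
  have hζ := Complex.isPrimitiveRoot_exp 15 (by norm_num)
  set ζ := Complex.exp (2 * Real.pi * Complex.I / (15 : ℕ))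
  have hex : ∀ i, ∃ s : Fin 15, ζ ^ (s : ℕ) = (lam i g : ℂ) := by
    intro i
    have : (lam i g : ℂ) ^ 15 = 1 := by
      rw [← Units.val_pow_eq_pow_val, ← map_pow, ← hord, pow_orderOf_eq_one]; simp
    obtain ⟨s, hs, e⟩ := hζ.eq_pow_of_pow_eq_one this
    exact ⟨⟨s, hs⟩, e⟩
  choose κ hκ using hex
  have hκinj : Function.Injective κ := by
    intro i j hij
    apply hinj
    have hgij : lam i g = lam j g := by
      apply Units.ext
      rw [← hκ i, ← hκ j, hij]
    ext x
    obtain ⟨n, rfl⟩ := Subgroup.mem_zpowers_iff.1 (hg x)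
    rw [map_zpow, map_zpow, hgij]
  set S : Finset (Fin 15) := Finset.univ.image κ with hSdef
  have hSc : S.card = k := by
    rw [hSdef, Finset.card_image_of_injective _ hκinj]; simp
  have hval : ∀ z : ℂ, z ^ 15 = 1 → z ≠ 1 → ∃ x : C, x ≠ 1 ∧ χ x = ε * expSum S z := by
    intro z hz hz1
    obtain ⟨t, _, rfl⟩ := hζ.eq_pow_of_pow_eq_one hz
    have hx : g ^ t ≠ 1 := by
      intro hgt
      apply hz1
      rw [hζ.pow_eq_one_iff_dvd, ← hord]
      exact orderOf_dvd_of_pow_eq_one hgt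
    refine ⟨g ^ t, hx, ?_⟩
    rw [h, if_neg hx, mul_zero, zero_add, expSum, hSdef,
      Finset.sum_image fun i _ j _ hij => hκinj hij]
    congr 1
    refine Finset.sum_congr rfl fun i _ => ?_
    rw [map_pow, Units.val_pow_eq_pow_val, ← hκ i, ← pow_mul, ← pow_mul, mul_comm]
  have hnorm : ∀ w : ℂ, ‖(ε : ℂ) * w‖ = ‖w‖ := by
    intro w
    rcases hε with rfl | rfl <;> simp
  refine core (S := S) (by rwa [hSc]) ?_ ?_
  · intro z hz hz1
    obtain ⟨x, hx, e⟩ := hval z hz hz1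
    rw [← hnorm, ← e]
    exact norm_le_two (hχ x hx)
  · intro z hz hz1 h2
    obtain ⟨x, hx, e⟩ := hval z hz hz1
    have h3 := isIntegral_half (hχ x hx) (by rw [e, hnorm, h2])
    rw [e] at h3
    rcases hε with rfl | rfl
    · simpa using h3
    · simpa [neg_div] using h3.neg

end Cyclic15

theorem stmt_14 {C : Type*} [CommGroup C] [Fintype C] [DecidableEq C] [IsCyclic C]
    (hcard : Fintype.card C = 15) :
    ¬ ∃ χ : C → ℂ,
        (∀ x : C, x ≠ 1 → IsSumAtMostTwoRootsOfUnity (χ x)) ∧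
        ((∃ (a ε : ℤ) (lam : Fin 5 → (C →* ℂˣ)),
            (ε = 1 ∨ ε = -1) ∧ Function.Injective lam ∧
            ∀ g : C, χ g = (a : ℂ) * (if g = 1 then (Fintype.card C : ℂ) else 0)
              + (ε : ℂ) * ∑ i : Fin 5, (lam i g : ℂ)) ∨
         (∃ (a ε : ℤ) (lam : Fin 6 → (C →* ℂˣ)),
            (ε = 1 ∨ ε = -1) ∧ Function.Injective lam ∧
            ∀ g : C, χ g = (a : ℂ) * (if g = 1 then (Fintype.card C : ℂ) else 0)
              + (ε : ℂ) * ∑ i : Fin 6, (lam i g : ℂ))) := by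
  rintro ⟨χ, hχ, ⟨a, ε, lam, hε, hinj, h⟩ | ⟨a, ε, lam, hε, hinj, h⟩⟩
  · exact Cyclic15.no_char hcard (Or.inl rfl) χ hχ a ε lam hε hinj h
  · exact Cyclic15.no_char hcard (Or.inr rfl) χ hχ a ε lam hε hinj h
end

section
/- Let G be a finite group and let χ be a generalized character of G, with (integer) virtual degree d = χ(1), such that χ(x) is a sum of at most two roots of unity for every nonidentity x ∈ G. Suppose there exist primes p₀, p₁, p₂ dividing |G|, each ≥ 5, such that d ≡ 0 (mod p₀), d ≡ 1 or −1 (mod p₁), and d ≡ 2 or −2 (mod p₂). Then the induced subgraph of the prime graph of G on the odd primes dividing |G| is disconnected: the set of odd primes dividing |G| can be partitioned into two nonempty disjoint sets S and T such that no element of G has order p·q with p ∈ S and q ∈ T. -/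
/-- A generalized character of a finite group: the difference of the characters of two
finite-dimensional complex representations. -/
def IsGenChar (G : Type) [Group G] (χ : G → ℂ) : Prop :=
  ∃ V W : FDRep ℂ G, ∀ g : G, χ g = V.character g - W.character g

open Polynomial

/-! ### Traces of totally nonnegative cyclotomic integers -/

/-- The norm from the `n`-th cyclotomic field of an element of `ℤ[ζ]` is an integer: it is the
resultant of the cyclotomic polynomial with `P`. -/
lemma exists_int_eq_prod_aeval_primitiveRoots {n : ℕ} (hn : 0 < n) (P : ℤ[X]) :
    ∃ N : ℤ, ∏ μ ∈ primitiveRoots n ℂ, aeval μ P = N := by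
  have : NeZero n := ⟨hn.ne'⟩
  refine ⟨resultant (cyclotomic n ℤ) P (cyclotomic n ℤ).natDegree P.natDegree, ?_⟩
  have h := resultant_eq_prod_eval (cyclotomic n ℂ) (P.map (Int.castRingHom ℂ)) P.natDegree
    natDegree_map_le (IsAlgClosed.splits _)
  rw [← map_cyclotomic_int, resultant_map_map,
    (cyclotomic.monic n ℤ).natDegree_map, ((cyclotomic.monic n ℤ).map _).leadingCoeff, one_pow,
    one_mul, map_cyclotomic_int, cyclotomic.roots_eq_primitiveRoots_val] at h
  have h' : ((cyclotomic n ℤ).resultant P (cyclotomic n ℤ).natDegree P.natDegree : ℂ) = _ := h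
  rw [h', Finset.prod]
  congr 1
  refine Multiset.map_congr rfl fun μ _ => ?_
  rw [eval_map, aeval_def]; rfl

/-- Let `P(ζ)` be a cyclotomic integer all of whose conjugates `x μ` are real and nonnegative.
Unless it vanishes, its norm is a positive integer, so by the inequality of arithmetic and
geometric means (used in the form `log x ≤ x - 1`) the mean of the conjugates is at least `1`, with
equality only if all of them equal `1`. -/
lemma cyclotomic_trace_bound {n : ℕ} (hn : 0 < n) (P : ℤ[X]) (x : ℂ → ℝ)
    (hx : ∀ μ ∈ primitiveRoots n ℂ, aeval μ P = (x μ : ℂ))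
    (h0 : ∀ μ ∈ primitiveRoots n ℂ, 0 ≤ x μ) :
    (∀ μ ∈ primitiveRoots n ℂ, x μ = 0) ∨
      ((n.totient : ℝ) ≤ ∑ μ ∈ primitiveRoots n ℂ, x μ ∧
        (∑ μ ∈ primitiveRoots n ℂ, x μ ≤ n.totient → ∀ μ ∈ primitiveRoots n ℂ, x μ = 1)) := by
  have hcard : (primitiveRoots n ℂ).card = n.totient := Complex.card_primitiveRoots n
  by_cases hz : ∃ μ ∈ primitiveRoots n ℂ, x μ = 0
  · left
    obtain ⟨μ, hμ, hμ0⟩ := hz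
    intro ν hν
    have hμ' := (mem_primitiveRoots hn).1 hμ
    have hν' := (mem_primitiveRoots hn).1 hν
    have hdvd : cyclotomic n ℤ ∣ P := by
      rw [cyclotomic_eq_minpoly hμ' hn]
      exact minpoly.isIntegrallyClosed_dvd (hμ'.isIntegral hn) (by rw [hx μ hμ, hμ0]; simp)
    have : aeval ν P = 0 := by
      obtain ⟨Q, rfl⟩ := hdvd
      rw [map_mul, cyclotomic_eq_minpoly hν' hn, minpoly.aeval, zero_mul]
    rw [hx ν hν] at this
    exact_mod_cast this
  · right
    push Not at hz
    have hpos : ∀ μ ∈ primitiveRoots n ℂ, 0 < x μ := fun μ hμ =>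
      lt_of_le_of_ne (h0 μ hμ) (hz μ hμ).symm
    obtain ⟨N, hN⟩ := exists_int_eq_prod_aeval_primitiveRoots hn P
    have hN' : ∏ μ ∈ primitiveRoots n ℂ, x μ = N := by
      rw [Finset.prod_congr rfl hx] at hN
      exact_mod_cast hN
    have hprod : 1 ≤ ∏ μ ∈ primitiveRoots n ℂ, x μ := by
      have := Finset.prod_pos hpos
      rw [hN'] at this ⊢
      exact_mod_cast this
    have hlog : 0 ≤ ∑ μ ∈ primitiveRoots n ℂ, Real.log (x μ) := by
      rw [← Real.log_prod (fun μ hμ => (hz μ hμ))]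
      exact Real.log_nonneg hprod
    have hle : ∀ μ ∈ primitiveRoots n ℂ, Real.log (x μ) ≤ x μ - 1 := fun μ hμ =>
      Real.log_le_sub_one_of_pos (hpos μ hμ)
    have hs : ∑ μ ∈ primitiveRoots n ℂ, (x μ - 1) = ∑ μ ∈ primitiveRoots n ℂ, x μ - n.totient := by
      rw [Finset.sum_sub_distrib, Finset.sum_const, hcard]; simp
    refine ⟨?_, fun hS μ hμ => ?_⟩
    · have := Finset.sum_le_sum hle
      linarith
    · by_contra hne
      have := Finset.sum_lt_sum hle ⟨μ, hμ, Real.log_lt_sub_one_of_pos (hpos μ hμ) hne⟩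
      linarith

/-! ### Character values as values of an integer polynomial -/

/-- An endomorphism `f` with `f ^ n = 1` is diagonalizable with eigenvalues powers of `ζ`; the
polynomial `A = ∑ (multiplicity of ζ ^ r) * X ^ r` then gives the traces of all powers of `f`. -/
lemma exists_trace_pow {V : Type} [AddCommGroup V] [Module ℂ V] [FiniteDimensional ℂ V]
    {n : ℕ} (hn : 0 < n) {ζ : ℂ} (hζ : IsPrimitiveRoot ζ n)
    (f : Module.End ℂ V) (hf : f ^ n = 1) :
    ∃ A : ℤ[X], ∀ i : ℕ, LinearMap.trace ℂ V (f ^ i) = aeval (ζ ^ i) A := by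
  classical
  have hss : f.IsSemisimple := by
    apply Module.End.isSemisimple_of_squarefree_aeval_eq_zero (p := X ^ n - 1)
    · have := (X_pow_sub_one_separable_iff (F := ℂ) (n := n)).2 (by exact_mod_cast hn.ne')
      exact this.squarefree
    · simp [hf]
  have htop : ⨆ μ, f.eigenspace μ = ⊤ := by
    rw [← Module.End.iSup_maxGenEigenspace_eq_top f]
    congr 1; ext1 μ
    exact (hss.isFinitelySemisimple.maxGenEigenspace_eq_eigenspace μ).symm
  have hind := f.eigenspaces_iSupIndep
  have hinternal : DirectSum.IsInternal (fun μ => f.eigenspace μ) :=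
    DirectSum.isInternal_submodule_of_iSupIndep_of_iSup_eq_top hind htop
  have hfin : {μ | f.eigenspace μ ≠ ⊥}.Finite :=
    WellFoundedGT.finite_ne_bot_of_iSupIndep hind
  have hroot : ∀ μ ∈ hfin.toFinset, ∃ r : ℕ, ζ ^ r = μ := by
    intro μ hμ
    have : NeZero n := ⟨hn.ne'⟩
    have hev : f.HasEigenvalue μ := by
      simpa [Module.End.hasEigenvalue_iff] using hμ
    obtain ⟨v, hv⟩ := hev.exists_hasEigenvector
    have h1 := hv.pow_apply n
    rw [hf] at h1
    have hμn : μ ^ n = 1 := by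
      have h2 : (μ ^ n - 1) • v = 0 := by
        rw [sub_smul, ← h1]; simp
      rcases smul_eq_zero.1 h2 with h | h
      · exact sub_eq_zero.1 h
      · exact absurd h hv.2
    obtain ⟨r, _, hr⟩ := hζ.eq_pow_of_pow_eq_one hμn
    exact ⟨r, hr⟩
  choose! r hr using hroot
  refine ⟨∑ μ ∈ hfin.toFinset, (Module.finrank ℂ (f.eigenspace μ) : ℤ[X]) * X ^ r μ, fun i => ?_⟩
  have happ : ∀ (μ : ℂ) (v : V), v ∈ f.eigenspace μ → (f ^ i) v = μ ^ i • v := by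
    intro μ v hv
    induction i with
    | zero => simp
    | succ i ih =>
      rw [pow_succ', Module.End.mul_apply, ih, map_smul, Module.End.mem_eigenspace_iff.1 hv,
        smul_smul, pow_succ]
  have hmaps : ∀ μ, Set.MapsTo (f ^ i) (f.eigenspace μ) (f.eigenspace μ) := by
    intro μ v hv
    have hv' : v ∈ f.eigenspace μ := hv
    rw [happ μ v hv']
    exact Submodule.smul_mem _ _ hv'
  rw [LinearMap.trace_eq_sum_trace_restrict' hinternal hfin hmaps, map_sum]
  refine Finset.sum_congr rfl fun μ hμ => ?_
  have : LinearMap.restrict (f ^ i) (hmaps μ) = μ ^ i • LinearMap.id := by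
    ext v
    exact happ μ v v.2
  rw [this, map_smul, LinearMap.trace_id]
  simp only [smul_eq_mul, map_mul, map_natCast, map_pow, aeval_X]
  rw [← pow_mul, mul_comm i, pow_mul, hr μ hμ, mul_comm]

lemma exists_poly_of_genChar (G : Type) [Group G] (V : FDRep ℂ G) (x : G) {n : ℕ} (hn : 0 < n)
    (hx : x ^ n = 1) {ζ : ℂ} (hζ : IsPrimitiveRoot ζ n) :
    ∃ A : ℤ[X], ∀ i : ℕ, V.character (x ^ i) = aeval (ζ ^ i) A := by
  obtain ⟨A, hA⟩ := exists_trace_pow hn hζ (V.ρ x) (by rw [← map_pow, hx, map_one])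
  exact ⟨A, fun i => by rw [← hA i, ← map_pow]; rfl⟩

/-! ### Fourier analysis on `ZMod N` -/

open ZMod in
lemma sum_stdAddChar_mul {N : ℕ} [NeZero N] (b : ZMod N) :
    ∑ k : ZMod N, stdAddChar (b * k) = if b = 0 then (N : ℂ) else 0 := by
  have := AddChar.sum_mulShift b (isPrimitive_stdAddChar N)
  simp only [mul_comm b]
  rw [this]; split_ifs <;> simp [ZMod.card]

open ZMod in
lemma conj_stdAddChar {N : ℕ} [NeZero N] (k : ZMod N) :
    (starRingEnd ℂ) (stdAddChar k) = stdAddChar (-k) := by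
  rw [AddChar.map_neg_eq_conj]

open ZMod in
lemma fourier_inversion {N : ℕ} [NeZero N] (c : ZMod N → ℂ) (b₀ : ZMod N) :
    ∑ k : ZMod N, (∑ b, c b * stdAddChar (b * k)) * stdAddChar (-(b₀ * k)) = N * c b₀ := by
  have h1 : ∀ k : ZMod N, (∑ b, c b * stdAddChar (b * k)) * stdAddChar (-(b₀ * k)) =
      ∑ b, c b * stdAddChar ((b - b₀) * k) := by
    intro k
    rw [Finset.sum_mul]
    refine Finset.sum_congr rfl fun b _ => ?_
    rw [mul_assoc, ← AddChar.map_add_eq_mul]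
    congr 2; ring
  simp only [h1]
  rw [Finset.sum_comm]
  simp only [← Finset.mul_sum, sum_stdAddChar_mul, sub_eq_zero]
  simp [mul_comm]

open ZMod in
lemma parseval {N : ℕ} [NeZero N] (c : ZMod N → ℂ) :
    ∑ k : ZMod N, ‖∑ b, c b * stdAddChar (b * k)‖ ^ 2 = N * ∑ b, ‖c b‖ ^ 2 := by
  have h : ∑ k : ZMod N, ((‖∑ b, c b * stdAddChar (b * k)‖ ^ 2 : ℝ) : ℂ) =
      N * ∑ b, ((‖c b‖ ^ 2 : ℝ) : ℂ) := by
    have h1 : ∀ k : ZMod N, ((‖∑ b, c b * stdAddChar (b * k)‖ ^ 2 : ℝ) : ℂ) =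
        ∑ b₀, (starRingEnd ℂ (c b₀)) *
          ((∑ b, c b * stdAddChar (b * k)) * stdAddChar (-(b₀ * k))) := by
      intro k
      push_cast
      rw [← Complex.mul_conj', map_sum, Finset.mul_sum]
      refine Finset.sum_congr rfl fun b _ => ?_
      rw [map_mul, conj_stdAddChar]; ring
    simp only [h1]
    rw [Finset.sum_comm]
    simp only [← Finset.mul_sum, fourier_inversion]
    rw [Finset.mul_sum]
    refine Finset.sum_congr rfl fun b _ => ?_
    push_cast
    rw [← Complex.mul_conj']; ring
  exact_mod_cast h

/-! ### Cyclotomic integers of modulus at most two -/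

/-- The squared modulus of a cyclotomic integer is a cyclotomic integer: complex conjugation sends
`μ` to `μ ^ (n - 1)`. -/
lemma aeval_mul_comp_eq_normSq {n : ℕ} (hn : 0 < n) {μ : ℂ} (hμ : μ ^ n = 1) (A : ℤ[X]) :
    aeval μ (A * A.comp (X ^ (n - 1))) = ((‖aeval μ A‖ ^ 2 : ℝ) : ℂ) := by
  have hnorm : ‖μ‖ = 1 := Complex.norm_eq_one_of_pow_eq_one hμ hn.ne'
  have hconj : μ ^ (n - 1) = (starRingEnd ℂ) μ := by
    have h1 : μ * (starRingEnd ℂ) μ = 1 := by rw [Complex.mul_conj', hnorm]; norm_num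
    have h2 : μ * μ ^ (n - 1) = 1 := by rw [← pow_succ', Nat.sub_add_cancel hn, hμ]
    have hμ0 : μ ≠ 0 := by intro h; simp [h] at hnorm
    exact mul_left_cancel₀ hμ0 (h2.trans h1.symm)
  have h3 : aeval ((starRingEnd ℂ) μ) A = (starRingEnd ℂ) (aeval μ A) :=
    aeval_algHom_apply (starRingEnd ℂ).toIntAlgHom μ A
  rw [map_mul, aeval_comp]
  simp only [map_pow, aeval_X]
  rw [hconj, h3, Complex.mul_conj']; push_cast; rfl

/-- `cyclotomic_trace_bound` applied to `4 - |A(μ)|²`: if all conjugates of `A(μ)` have modulus at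
most `2`, either all have modulus exactly `2`, or the mean of their squared moduli is at most `3`,
with equality only if all squared moduli equal `3`. -/
lemma norm_sq_trace_dichotomy {n : ℕ} (hn : 0 < n) (A : ℤ[X])
    (hA : ∀ μ ∈ primitiveRoots n ℂ, ‖aeval μ A‖ ≤ 2) :
    (∀ μ ∈ primitiveRoots n ℂ, ‖aeval μ A‖ = 2) ∨
      (∑ μ ∈ primitiveRoots n ℂ, ‖aeval μ A‖ ^ 2 ≤ 3 * n.totient ∧
        (3 * n.totient ≤ ∑ μ ∈ primitiveRoots n ℂ, ‖aeval μ A‖ ^ 2 →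
          ∀ μ ∈ primitiveRoots n ℂ, ‖aeval μ A‖ ^ 2 = 3)) := by
  have hcard : (primitiveRoots n ℂ).card = n.totient := Complex.card_primitiveRoots n
  have hsum : ∑ μ ∈ primitiveRoots n ℂ, (4 - ‖aeval μ A‖ ^ 2) =
      4 * n.totient - ∑ μ ∈ primitiveRoots n ℂ, ‖aeval μ A‖ ^ 2 := by
    rw [Finset.sum_sub_distrib, Finset.sum_const, hcard, nsmul_eq_mul, mul_comm]
  rcases cyclotomic_trace_bound hn (4 - A * A.comp (X ^ (n - 1))) (fun μ => 4 - ‖aeval μ A‖ ^ 2)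
    (fun μ hμ => by
      have hμ' := (mem_primitiveRoots hn).1 hμ
      rw [map_sub, aeval_mul_comp_eq_normSq hn hμ'.pow_eq_one]
      push_cast
      rw [map_ofNat])
    (fun μ hμ => by nlinarith only [hA μ hμ, norm_nonneg (aeval μ A)]) with h | ⟨h1, h2⟩
  · left
    intro μ hμ
    have h3 := h μ hμ
    nlinarith only [h3, norm_nonneg (aeval μ A)]
  · right
    rw [hsum] at h1 h2
    exact ⟨by linarith, fun h μ hμ => by linarith [h2 (by linarith) μ hμ]⟩

/-! ### Primitive roots of unity as values of additive characters -/

open ZMod in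
lemma isPrimitiveRoot_stdAddChar {q : ℕ} [NeZero q] (hq : q.Prime) {k : ZMod q} (hk : k ≠ 0) :
    IsPrimitiveRoot (stdAddChar k : ℂ) q := by
  have h1 : (stdAddChar k : ℂ) ^ q = 1 := by
    rw [← AddChar.map_nsmul_eq_pow]; simp
  have h2 : (stdAddChar k : ℂ) ≠ 1 := by
    intro h
    exact hk (injective_stdAddChar (by rw [h, AddChar.map_zero_eq_one]))
  have : Fact q.Prime := ⟨hq⟩
  exact IsPrimitiveRoot.iff_orderOf.2 (orderOf_eq_prime h1 h2)

open ZMod in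
lemma image_stdAddChar {q : ℕ} [NeZero q] (hq : q.Prime) :
    (Finset.univ.erase (0 : ZMod q)).image (fun k => (stdAddChar k : ℂ)) =
      primitiveRoots q ℂ := by
  have hinj : Function.Injective fun k : ZMod q => (stdAddChar k : ℂ) := injective_stdAddChar
  apply Finset.eq_of_subset_of_card_le
  · intro μ hμ
    obtain ⟨k, hk, rfl⟩ := Finset.mem_image.1 hμ
    exact (mem_primitiveRoots hq.pos).2 (isPrimitiveRoot_stdAddChar hq (Finset.ne_of_mem_erase hk))
  · rw [Finset.card_image_of_injective _ hinj, Complex.card_primitiveRoots,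
      Nat.totient_prime hq, Finset.card_erase_of_mem (Finset.mem_univ _), Finset.card_univ,
      ZMod.card]

open ZMod in
lemma sum_primitiveRoots_prime {q : ℕ} [NeZero q] (hq : q.Prime) (f : ℂ → ℝ) :
    ∑ μ ∈ primitiveRoots q ℂ, f μ = ∑ k ∈ Finset.univ.erase (0 : ZMod q), f (stdAddChar k) := by
  rw [← image_stdAddChar hq, Finset.sum_image fun _ _ _ _ h => injective_stdAddChar h]

open ZMod in
lemma isPrimitiveRoot_stdAddChar_mul {p q : ℕ} [NeZero p] [NeZero q] (hp : p.Prime) (hq : q.Prime)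
    (hpq : p ≠ q) {j : ZMod p} {k : ZMod q} (hj : j ≠ 0) (hk : k ≠ 0) :
    IsPrimitiveRoot (stdAddChar j * stdAddChar k : ℂ) (p * q) := by
  have h1 := (isPrimitiveRoot_stdAddChar hp hj).eq_orderOf
  have h2 := (isPrimitiveRoot_stdAddChar hq hk).eq_orderOf
  have hc : (orderOf (stdAddChar j : ℂ)).Coprime (orderOf (stdAddChar k : ℂ)) := by
    rw [← h1, ← h2]; exact (Nat.coprime_primes hp hq).2 hpq
  rw [IsPrimitiveRoot.iff_orderOf, (Commute.all _ _).orderOf_mul_eq_mul_orderOf_of_coprime hc,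
    ← h1, ← h2]

open ZMod in
lemma injective_stdAddChar_mul {p q : ℕ} [NeZero p] [NeZero q] (hcop : p.Coprime q) :
    Function.Injective fun x : ZMod p × ZMod q => (stdAddChar x.1 * stdAddChar x.2 : ℂ) := by
  rintro ⟨j, k⟩ ⟨j', k'⟩ h
  simp only at h
  -- the `q`-th power kills the second factor, the `p`-th power the first one
  have h1 : (q : ZMod p) * j = q * j' := by
    have := congrArg (· ^ q) h
    simp only [mul_pow, ← AddChar.map_nsmul_eq_pow, nsmul_eq_mul, CharP.cast_eq_zero, zero_mul,
      AddChar.map_zero_eq_one, mul_one] at this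
    exact injective_stdAddChar this
  have h2 : (p : ZMod q) * k = p * k' := by
    have := congrArg (· ^ p) h
    simp only [mul_pow, ← AddChar.map_nsmul_eq_pow, nsmul_eq_mul, CharP.cast_eq_zero, zero_mul,
      AddChar.map_zero_eq_one, one_mul] at this
    exact injective_stdAddChar this
  have u1 : IsUnit (q : ZMod p) := (ZMod.isUnit_iff_coprime q p).2 hcop.symm
  have u2 : IsUnit (p : ZMod q) := (ZMod.isUnit_iff_coprime p q).2 hcop
  rw [u1.mul_left_cancel h1, u2.mul_left_cancel h2]

open ZMod in
lemma image_stdAddChar_mul {p q : ℕ} [NeZero p] [NeZero q] (hp : p.Prime) (hq : q.Prime)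
    (hpq : p ≠ q) :
    ((Finset.univ.erase (0 : ZMod p)) ×ˢ (Finset.univ.erase (0 : ZMod q))).image
      (fun x => (stdAddChar x.1 * stdAddChar x.2 : ℂ)) = primitiveRoots (p * q) ℂ := by
  have hcop := (Nat.coprime_primes hp hq).2 hpq
  apply Finset.eq_of_subset_of_card_le
  · intro μ hμ
    obtain ⟨x, hx, rfl⟩ := Finset.mem_image.1 hμ
    have hx' := Finset.mem_product.1 hx
    exact (mem_primitiveRoots (Nat.mul_pos hp.pos hq.pos)).2 (isPrimitiveRoot_stdAddChar_mul hp hq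
      hpq (Finset.ne_of_mem_erase hx'.1) (Finset.ne_of_mem_erase hx'.2))
  · rw [Finset.card_image_of_injective _ (injective_stdAddChar_mul hcop), Complex.card_primitiveRoots,
      Nat.totient_mul hcop, Nat.totient_prime hq, Nat.totient_prime hp, Finset.card_product,
      Finset.card_erase_of_mem (Finset.mem_univ _), Finset.card_erase_of_mem (Finset.mem_univ _),
      Finset.card_univ, Finset.card_univ, ZMod.card, ZMod.card]

open ZMod in
lemma sum_primitiveRoots_mul {p q : ℕ} [NeZero p] [NeZero q] (hp : p.Prime) (hq : q.Prime)
    (hpq : p ≠ q) (f : ℂ → ℝ) :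
    ∑ μ ∈ primitiveRoots (p * q) ℂ, f μ =
      ∑ j ∈ Finset.univ.erase (0 : ZMod p), ∑ k ∈ Finset.univ.erase (0 : ZMod q),
        f (stdAddChar j * stdAddChar k) := by
  have hcop := (Nat.coprime_primes hp hq).2 hpq
  rw [← image_stdAddChar_mul hp hq hpq,
    Finset.sum_image fun _ _ _ _ h => injective_stdAddChar_mul hcop h, Finset.sum_product]

/-! ### Sums of at most two roots of unity -/

lemma IsRootOfUnity.norm_eq_one {z : ℂ} (hz : IsRootOfUnity z) : ‖z‖ = 1 := by
  obtain ⟨n, hn, h⟩ := hz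
  exact Complex.norm_eq_one_of_pow_eq_one h hn.ne'

lemma IsRootOfUnity.isIntegral {z : ℂ} (hz : IsRootOfUnity z) : IsIntegral ℤ z := by
  obtain ⟨n, hn, h⟩ := hz
  exact IsIntegral.of_pow hn (by rw [h]; exact isIntegral_one)

lemma IsSumAtMostTwoRootsOfUnity.norm_le {z : ℂ} (hz : IsSumAtMostTwoRootsOfUnity z) :
    ‖z‖ ≤ 2 := by
  rcases hz with rfl | h | ⟨u, v, hu, hv, rfl⟩
  · simp
  · rw [h.norm_eq_one]; norm_num
  · exact (norm_add_le _ _).trans (by rw [hu.norm_eq_one, hv.norm_eq_one]; norm_num)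

/-- Two roots of unity whose sum has modulus `2` coincide. -/
lemma IsSumAtMostTwoRootsOfUnity.exists_of_norm_eq_two {z : ℂ}
    (hz : IsSumAtMostTwoRootsOfUnity z) (h2 : ‖z‖ = 2) :
    ∃ w : ℂ, IsIntegral ℤ w ∧ z = 2 * w := by
  rcases hz with rfl | h | ⟨u, v, hu, hv, rfl⟩
  · simp at h2
  · rw [h.norm_eq_one] at h2; norm_num at h2
  · have h := parallelogram_law_with_norm ℝ u v
    rw [h2, hu.norm_eq_one, hv.norm_eq_one] at h
    have h0 : u - v = 0 := norm_eq_zero.1 (by nlinarith only [h, norm_nonneg (u - v)])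
    exact ⟨u, hu.isIntegral, by rw [← sub_eq_zero.1 h0]; ring⟩

lemma two_dvd_of_eq_two_mul_isIntegral {z : ℤ} {w : ℂ} (hw : IsIntegral ℤ w)
    (h : (z : ℂ) = 2 * w) : 2 ∣ z := by
  have h1 : w = ((z / 2 : ℚ) : ℂ) := by push_cast; rw [h]; ring
  rw [h1] at hw
  have h2 : IsIntegral ℤ (z / 2 : ℚ) :=
    (isIntegral_algebraMap_iff (A := ℚ) (B := ℂ) (FaithfulSMul.algebraMap_injective ℚ ℂ)).1 hw
  obtain ⟨t, ht⟩ := IsIntegrallyClosed.isIntegral_iff.1 h2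
  refine ⟨t, ?_⟩
  have ht' : (t : ℚ) = z / 2 := ht
  have : (z : ℚ) = 2 * t := by rw [ht']; ring
  exact_mod_cast this

lemma isIntegral_stdAddChar {N : ℕ} [NeZero N] (k : ZMod N) :
    IsIntegral ℤ (ZMod.stdAddChar k : ℂ) :=
  IsRootOfUnity.isIntegral ⟨N, NeZero.pos N, by rw [← AddChar.map_nsmul_eq_pow]; simp⟩

/-! ### Spread of integer vectors

The spread of an integer vector `v` with `n` entries is `n ∑ v a ^ 2 - (∑ v a) ^ 2`, the sum of
`(v a - v a') ^ 2` over unordered pairs. -/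

lemma two_mul_spread {α : Type*} [Fintype α] (v : α → ℤ) :
    2 * (Fintype.card α * ∑ a, v a ^ 2 - (∑ a, v a) ^ 2) = ∑ a, ∑ a', (v a - v a') ^ 2 := by
  have : ∀ a a', (v a - v a') ^ 2 = v a ^ 2 + v a' ^ 2 - 2 * (v a * v a') := fun a a' => by ring
  simp only [this, Finset.sum_add_distrib, Finset.sum_sub_distrib, Finset.sum_const,
    ← Finset.mul_sum, ← Finset.sum_mul, Finset.card_univ]
  simp only [nsmul_eq_mul, ← Finset.mul_sum]
  ring

/-- If the entries of `v` on `A` differ from those off `A` by at least `√K`, the pairs in `A × Aᶜ`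
alone contribute `K |A| |Aᶜ|` to the spread. -/
lemma spread_ge {α : Type*} [Fintype α] [DecidableEq α] (v : α → ℤ) (A : Finset α) (K : ℤ)
    (h : ∀ a ∈ A, ∀ a' ∉ A, K ≤ (v a - v a') ^ 2) :
    K * (A.card * (Fintype.card α - A.card)) ≤
      Fintype.card α * ∑ a, v a ^ 2 - (∑ a, v a) ^ 2 := by
  have h1 := two_mul_spread v
  have hc : (Aᶜ.card : ℤ) = Fintype.card α - A.card := by
    rw [Finset.card_compl, Nat.cast_sub (Finset.card_le_univ A)]
  have h2 : ∑ a ∈ A, ∑ a' ∈ Aᶜ, (v a - v a') ^ 2 ≤ ∑ a ∈ A, ∑ a', (v a - v a') ^ 2 :=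
    Finset.sum_le_sum fun a _ => Finset.sum_le_univ_sum_of_nonneg fun _ => sq_nonneg _
  have h3 : ∑ a ∈ Aᶜ, ∑ a' ∈ A, (v a - v a') ^ 2 ≤ ∑ a ∈ Aᶜ, ∑ a', (v a - v a') ^ 2 :=
    Finset.sum_le_sum fun a _ => Finset.sum_le_univ_sum_of_nonneg fun _ => sq_nonneg _
  have h4 : K * (A.card * Aᶜ.card) ≤ ∑ a ∈ A, ∑ a' ∈ Aᶜ, (v a - v a') ^ 2 := by
    calc K * (A.card * Aᶜ.card) = ∑ a ∈ A, ∑ a' ∈ Aᶜ, K := by simp; ring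
      _ ≤ _ := Finset.sum_le_sum fun a ha => Finset.sum_le_sum fun a' ha' =>
        h a ha a' (Finset.mem_compl.1 ha')
  have h5 : ∑ a ∈ Aᶜ, ∑ a' ∈ A, (v a - v a') ^ 2 = ∑ a ∈ A, ∑ a' ∈ Aᶜ, (v a - v a') ^ 2 := by
    rw [Finset.sum_comm]
    exact Finset.sum_congr rfl fun a _ => Finset.sum_congr rfl fun a' _ => by ring
  have h6 := Finset.sum_add_sum_compl A (fun a => ∑ a', (v a - v a') ^ 2)
  rw [hc] at h4
  linarith

/-- A nonconstant vector whose distinct entries differ by at least `√K` has spread at least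
`K (n - 1)`. -/
lemma spread_ge_of_ne {α : Type*} [Fintype α] [DecidableEq α] (v : α → ℤ) (K : ℤ) (hK : 0 ≤ K)
    {a₀ a₁ : α} (hne : v a₀ ≠ v a₁) (h : ∀ a a', v a ≠ v a' → K ≤ (v a - v a') ^ 2) :
    K * (Fintype.card α - 1) ≤ Fintype.card α * ∑ a, v a ^ 2 - (∑ a, v a) ^ 2 := by
  set A : Finset α := Finset.univ.filter fun a => v a = v a₀ with hA
  have h1 := spread_ge v A K (fun a ha a' ha' => h a a' (by
    simp only [hA, Finset.mem_filter, Finset.mem_univ, true_and] at ha ha'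
    rw [ha]; exact fun h => ha' h.symm))
  have h2 : 1 ≤ A.card := Finset.card_pos.2 ⟨a₀, by simp [hA]⟩
  have h3 : A.card < Fintype.card α := Finset.card_lt_univ_of_notMem (x := a₁) (by
    simp [hA]; exact fun h => hne h.symm)
  refine le_trans (mul_le_mul_of_nonneg_left ?_ hK) h1
  have h2' : (1 : ℤ) ≤ A.card := by exact_mod_cast h2
  have h3' : (A.card : ℤ) + 1 ≤ Fintype.card α := by exact_mod_cast h3
  nlinarith only [h2', h3']

lemma spread_shift {α : Type*} [Fintype α] (v : α → ℤ) (C : ℤ) :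
    Fintype.card α * ∑ a, (v a - C) ^ 2 - (∑ a, (v a - C)) ^ 2 =
      Fintype.card α * ∑ a, v a ^ 2 - (∑ a, v a) ^ 2 := by
  have h1 := two_mul_spread v
  have h2 := two_mul_spread (fun a => v a - C)
  simp only [sub_sub_sub_cancel_right] at h2
  linarith

lemma card_mul_sq_le_spread {α : Type*} [Fintype α] [DecidableEq α] [Nonempty α] (v : α → ℤ)
    (a b : α) :
    Fintype.card α * (v a - v b) ^ 2 ≤ 2 * (Fintype.card α * ∑ a, v a ^ 2 - (∑ a, v a) ^ 2) := by
  have hq : (0 : ℤ) < Fintype.card α := by exact_mod_cast Fintype.card_pos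
  by_cases hab : a = b
  · have := two_mul_spread v
    rw [this, hab]; simp only [sub_self]
    have : (0:ℤ) ≤ ∑ a, ∑ a', (v a - v a') ^ 2 := by positivity
    simpa using this
  set q : ℤ := ((Fintype.card α : ℕ) : ℤ) with hqd
  set s := ∑ a, v a with hs
  have h1 : ∑ x, (q * v x - s) ^ 2 = q * (q * ∑ a, v a ^ 2 - s ^ 2) := by
    have : ∀ x, (q * v x - s) ^ 2 = q ^ 2 * v x ^ 2 - 2 * q * s * v x + s ^ 2 := fun x => by ring
    simp only [this, Finset.sum_add_distrib, Finset.sum_sub_distrib, Finset.sum_const,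
      ← Finset.mul_sum, Finset.card_univ, ← hs, nsmul_eq_mul, ← hqd]
    ring
  have h2 : (q * v a - s) ^ 2 + (q * v b - s) ^ 2 ≤ ∑ x, (q * v x - s) ^ 2 := by
    rw [← Finset.sum_pair hab (f := fun x => (q * v x - s) ^ 2)]
    exact Finset.sum_le_univ_sum_of_nonneg fun _ => sq_nonneg _
  have h3 : (q * (v a - v b)) ^ 2 ≤ 2 * ((q * v a - s) ^ 2 + (q * v b - s) ^ 2) := by
    nlinarith only [sq_nonneg ((q * v a - s) + (q * v b - s))]
  have h4 : q * (q * (v a - v b) ^ 2) ≤ q * (2 * (q * ∑ a, v a ^ 2 - s ^ 2)) := by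
    rw [h1] at h2; nlinarith only [h2, h3]
  exact le_of_mul_le_mul_left h4 hq

/-! ### Integer matrices with small second moments -/

set_option maxHeartbeats 1000000 in
/-- The combinatorial heart of the argument. Let `m` be a `p × q` integer matrix with total sum
`d` divisible by `p`, and let `Wp`, `Wq`, `S` be defined by the second moments of its row sums,
column sums and entries. The bounds on these numbers force `q ∣ d`.

The row sums deviate from their mean `d / p` by a vector of square sum `E ∈ {0, 2}`. The parity
alternative for `S` would make some column spreads too large, so `S ≤ 3 (p - 1) (q - 1)`, and hence
at most two columns (three, in a borderline case with `p = 3`) are nonconstant. A constant column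
has sum divisible by `p`. Two such sums must agree, since otherwise they differ by at least
`p ≥ 3`, which contradicts the bound on `Wq`. With `C` their common value, `s = d - q C` is a
sum of two or three terms and is divisible by `p`; by Cauchy–Schwarz and the bound on `Wq` it is
too small to be nonzero. -/
lemma dvd_of_moments {α β : Type*} [Fintype α] [Fintype β] [DecidableEq α] [DecidableEq β]
    (m : α → β → ℤ) (p q : ℕ) (hp : p.Prime) (hq : q.Prime) (hα : Fintype.card α = p)
    (hβ : Fintype.card β = q) (hp2 : p ≠ 2) (hq2 : q ≠ 2) (hpq : p ≠ q)
    (d : ℤ) (hd : d = ∑ a, ∑ b, m a b) (hpd : (p : ℤ) ∣ d) (Wp Wq S : ℤ)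
    (hWp : p * ∑ a, (∑ b, m a b) ^ 2 = d ^ 2 + Wp)
    (hWq : q * ∑ b, (∑ a, m a b) ^ 2 = d ^ 2 + Wq)
    (hS : p * q * ∑ a, ∑ b, m a b ^ 2 = d ^ 2 + Wp + Wq + S)
    (hWp4 : Wp ≤ 4 * (p - 1))
    (hWq4 : Wq ≤ 3 * (q - 1) ∨
      (Wq ≤ 4 * (q - 1) ∧ ∀ b b', 2 ∣ ∑ a, m a b - ∑ a, m a b'))
    (hS4 : S < 3 * (p - 1) * (q - 1) ∨
      (S = 3 * (p - 1) * (q - 1) ∧ (p = 3 → Wq = 0 ∨ 3 * ((q : ℤ) - 1) ≤ Wq)) ∨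
      (S = 4 * (p - 1) * (q - 1) ∧
        ∀ a a' b b', 2 ∣ (m a b - m a' b) - (m a b' - m a' b'))) :
    (q : ℤ) ∣ d := by
  classical
  have hp3 : 3 ≤ p := by have := hp.two_le; omega
  have hq3 : 3 ≤ q := by have := hq.two_le; omega
  have hp3' : (3 : ℤ) ≤ p := by exact_mod_cast hp3
  have hq3' : (3 : ℤ) ≤ q := by exact_mod_cast hq3
  have : Nonempty α := Fintype.card_pos_iff.1 (by omega)
  have : Nonempty β := Fintype.card_pos_iff.1 (by omega)
  have hge5 : ∀ l : ℕ, l.Prime → l ≠ 2 → l ≠ 3 → (5 : ℤ) ≤ l := by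
    intro l hl h2 h3
    have h4 : l ≠ 4 := by rintro rfl; exact absurd hl (by norm_num)
    have := hl.two_le
    omega
  -- `D` is the mean of the row sums, `E` the square sum of their deviations from it
  obtain ⟨D, hD⟩ := hpd
  set r : α → ℤ := fun a => ∑ b, m a b with hr
  set c : β → ℤ := fun b => ∑ a, m a b with hc
  have hrd : ∑ a, r a = d := hd.symm
  have hcd : ∑ b, c b = d := by rw [hd]; exact Finset.sum_comm
  set E : ℤ := ∑ a, (r a - D) ^ 2 with hE
  have he0 : ∑ a, (r a - D) = 0 := by
    rw [Finset.sum_sub_distrib, hrd]; simp [hα, hD]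
  have hWE : Wp = p * E := by
    have := spread_shift r D
    rw [he0, hrd, hα, ← hE] at this
    change p * ∑ a, r a ^ 2 = _ at hWp
    linarith
  have hE2 : E ≤ 3 := by
    by_contra! h
    rw [hWE] at hWp4; nlinarith only [h, hWp4, hp3']
  have hE0 : 0 ≤ E := Finset.sum_nonneg fun _ _ => sq_nonneg _
  have hEeven : 2 ∣ E := by
    have h1 : E - ∑ a, (r a - D) = ∑ a, ((r a - D) ^ 2 - (r a - D)) :=
      (Finset.sum_sub_distrib _ _).symm
    rw [he0, sub_zero] at h1
    rw [h1]
    refine Finset.dvd_sum fun a _ => ?_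
    have := Int.even_mul_pred_self (r a - D)
    rw [show (r a - D) ^ 2 - (r a - D) = (r a - D) * (r a - D - 1) by ring]
    exact this.two_dvd
  have hE02 : E = 0 ∨ E = 2 := by omega
  -- the spreads `V` of the columns
  set V : β → ℤ := fun b => p * ∑ a, m a b ^ 2 - c b ^ 2 with hV
  have hVsum : q * ∑ b, V b = p * E + S := by
    simp only [hV, Finset.sum_sub_distrib, ← Finset.mul_sum]
    rw [Finset.sum_comm]
    change q * ∑ b, c b ^ 2 = _ at hWq
    linarith
  have hVeq : ∀ b, V b = Fintype.card α * ∑ a, m a b ^ 2 - (∑ a, m a b) ^ 2 := by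
    intro b; rw [hα]
  have hV0 : ∀ b, 0 ≤ V b := by
    intro b
    have h1 := two_mul_spread (fun a => m a b)
    have h2 : 0 ≤ ∑ a, ∑ a', (m a b - m a' b) ^ 2 :=
      Finset.sum_nonneg fun _ _ => Finset.sum_nonneg fun _ _ => sq_nonneg _
    have h3 := hVeq b
    linarith
  have hone : ∀ x y : ℤ, x ≠ y → 1 ≤ (x - y) ^ 2 := fun x y h => by
    have : x - y ≠ 0 := sub_ne_zero.2 h
    have := sq_pos_of_ne_zero this
    omega
  set B : Finset β := Finset.univ.filter fun b => ∃ a a', m a b ≠ m a' b with hB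
  have hVB : ∀ b ∈ B, (p : ℤ) - 1 ≤ V b := by
    intro b hb
    simp only [hB, Finset.mem_filter, Finset.mem_univ, true_and] at hb
    obtain ⟨a, a', h⟩ := hb
    have := spread_ge_of_ne (fun a => m a b) 1 (by norm_num) h (fun _ _ h => hone _ _ h)
    rw [hVeq b, ← hα]; linarith
  have hBsum : B.card * ((p : ℤ) - 1) ≤ ∑ b, V b := by
    calc B.card * ((p : ℤ) - 1) = ∑ b ∈ B, ((p : ℤ) - 1) := by rw [Finset.sum_const, nsmul_eq_mul]
      _ ≤ ∑ b ∈ B, V b := Finset.sum_le_sum hVB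
      _ ≤ _ := Finset.sum_le_univ_sum_of_nonneg hV0
  have hS3 : S < 3 * (p - 1) * (q - 1) ∨
      (S = 3 * (p - 1) * (q - 1) ∧ (p = 3 → Wq = 0 ∨ 3 * ((q : ℤ) - 1) ≤ Wq)) := by
    rcases hS4 with h | h | ⟨hSe, hev⟩
    · exact Or.inl h
    · exact Or.inr h
    exfalso
    -- `q` is odd, so the parity condition says `m a b - m a' b ≡ r a - r a'` modulo `2`
    have hqodd : ¬ (2 : ℤ) ∣ q := by
      have := hq.eq_one_or_self_of_dvd 2
      intro h
      have h' : 2 ∣ q := by exact_mod_cast h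
      have := this h'
      omega
    have hpar : ∀ a a' b, 2 ∣ (r a - r a') - (m a b - m a' b) := by
      intro a a' b
      have h1 : (r a - r a') - q * (m a b - m a' b) =
          ∑ b', ((m a b' - m a' b') - (m a b - m a' b)) := by
        simp only [hr, Finset.sum_sub_distrib, Finset.sum_const, Finset.card_univ, hβ,
          nsmul_eq_mul]
        ring
      have h2 : 2 ∣ (r a - r a') - q * (m a b - m a' b) := by
        rw [h1]; exact Finset.dvd_sum fun b' _ => hev _ _ _ _
      have h3 : (2 : ℤ) ∣ ((q : ℤ) - 1) * (m a b - m a' b) :=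
        Dvd.dvd.mul_right (by omega) _
      have := dvd_add h2 h3
      convert! this using 1; ring
    rcases hE02 with hE' | hE'
    · have hr0 : ∀ a, r a = D := by
        intro a
        have := (Finset.sum_eq_zero_iff_of_nonneg (fun a _ => sq_nonneg (r a - D))).1 hE' a
          (Finset.mem_univ a)
        exact sub_eq_zero.1 (pow_eq_zero_iff two_ne_zero |>.1 this)
      by_cases hex : ∃ b a a', m a b ≠ m a' b
      · obtain ⟨b, a, a', hne⟩ := hex
        have := spread_ge_of_ne (fun a => m a b) 4 (by norm_num) hne (fun x y hxy => by
          have h1 := hpar x y b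
          rw [hr0, hr0] at h1
          obtain ⟨t, ht⟩ : 2 ∣ m x b - m y b := by omega
          have ht0 : t ≠ 0 := by rintro rfl; apply hxy; omega
          have := sq_pos_of_ne_zero ht0
          simp only [ht]; nlinarith only [this])
        rw [← hVeq b, hα] at this
        have h2 : V b ≤ ∑ b, V b := Finset.single_le_sum (fun b _ => hV0 b) (Finset.mem_univ b)
        rw [hE', hSe] at hVsum; nlinarith only [this, h2, hVsum, hp3', hq3']
      · push Not at hex
        have : ∀ b, V b = 0 := by
          intro b
          have h1 := two_mul_spread (fun a => m a b)
          have h2 : ∑ a, ∑ a', (m a b - m a' b) ^ 2 = 0 :=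
            Finset.sum_eq_zero fun a _ => Finset.sum_eq_zero fun a' _ => by rw [hex b a a']; ring
          have h3 := hVeq b
          linarith
        rw [Finset.sum_eq_zero (fun b _ => this b), hSe, hE'] at hVsum
        have h1 : (0 : ℤ) < (p - 1) * (q - 1) := mul_pos (by omega) (by omega)
        linarith
    · -- the set of rows whose deviation is odd has exactly two elements
      set A : Finset α := Finset.univ.filter fun a => ¬ (2 : ℤ) ∣ (r a - D) with hA
      have hsq : ∀ a, (r a - D) ^ 2 = if a ∈ A then 1 else 0 := by
        intro a
        have h1 : (r a - D) ^ 2 ≤ 2 := by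
          rw [← hE']
          exact Finset.single_le_sum (f := fun a => (r a - D) ^ 2) (fun b _ => sq_nonneg _)
            (Finset.mem_univ a)
        have h2 : r a - D ≤ 1 := by nlinarith only [h1]
        have h3 : -1 ≤ r a - D := by nlinarith only [h1]
        have h4 : r a - D = -1 ∨ r a - D = 0 ∨ r a - D = 1 := by omega
        rcases h4 with h | h | h <;> simp [hA, h]
      have hAc : (A.card : ℤ) = 2 := by
        rw [← hE', hE, Finset.sum_congr rfl (fun a _ => hsq a)]
        simp
      have hVA : ∀ b, 2 * ((p : ℤ) - 2) ≤ V b := by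
        intro b
        have := spread_ge (fun a => m a b) A 1 (fun a ha a' ha' => by
          apply hone
          intro h
          simp only [hA, Finset.mem_filter, Finset.mem_univ, true_and, not_not] at ha ha'
          have := hpar a a' b
          apply ha
          omega)
        rw [← hVeq b, hα, hAc] at this
        linarith
      have h1 : q * (2 * ((p : ℤ) - 2)) ≤ ∑ b, V b := by
        calc q * (2 * ((p : ℤ) - 2)) = ∑ b : β, (2 * ((p : ℤ) - 2)) := by simp [hβ]
          _ ≤ _ := Finset.sum_le_sum fun b _ => hVA b
      have h2 : q * (q * (2 * ((p : ℤ) - 2))) ≤ p * 2 + 4 * (p - 1) * (q - 1) := by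
        have h3 := mul_le_mul_of_nonneg_left h1 (show (0 : ℤ) ≤ q by omega)
        rwa [hVsum, hE', hSe] at h3
      by_cases hq' : q = 3
      · subst hq'
        push_cast at h2
        have : (4 : ℤ) ≤ p := by omega
        omega
      · have hq5 : (4 : ℤ) ≤ q := by omega
        have h3 : (q : ℤ) * q * (2 * (p - 2)) ≥ 4 * q * (2 * (p - 2)) := by
          have : (0 : ℤ) ≤ 2 * (p - 2) := by omega
          gcongr
        nlinarith only [h2, hp3', h3, hq5]
  -- a nonconstant column has spread at least `p - 1`, so the total spread bounds their number
  have hBcard : q * (B.card * ((p : ℤ) - 1)) ≤ p * E + S := by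
    rw [← hVsum]; exact mul_le_mul_of_nonneg_left hBsum (by omega)
  have hBcase : B.card ≤ 2 ∨ (B.card = 3 ∧ p = 3 ∧ (Wq = 0 ∨ 3 * ((q : ℤ) - 1) ≤ Wq)) := by
    by_contra! hcon
    obtain ⟨h1, h2⟩ := hcon
    have h1' : (3 : ℤ) ≤ B.card := by exact_mod_cast h1
    have hE2' : E ≤ 2 := by omega
    have hpE : p * E ≤ p * 2 := mul_le_mul_of_nonneg_left hE2' (by omega)
    have h3 : q * (3 * ((p : ℤ) - 1)) ≤ q * (B.card * ((p : ℤ) - 1)) := by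
      have : (0 : ℤ) ≤ p - 1 := by omega
      gcongr
    rcases hS3 with h | ⟨h, h'⟩
    · nlinarith only [h, h3, hpE, hBcard, hp3', hq3']
    · have hp3e : p = 3 := by
        have : (p : ℤ) ≤ 3 := by nlinarith only [h, h3, hpE, hBcard]
        omega
      have hB3 : B.card = 3 := by
        by_contra hne
        have h4 : (4 : ℤ) ≤ B.card := by
          have : 4 ≤ B.card := by omega
          exact_mod_cast this
        subst hp3e
        push_cast at *
        have : q * (4 * (3 - 1)) ≤ (q : ℤ) * (B.card * (3 - 1)) := by gcongr
        nlinarith only [this, h, hpE, hBcard, hq3']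
      have := h2 hB3 hp3e
      rcases h' hp3e with h5 | h5
      · exact this.1 h5
      · exact absurd this.2 (by omega)
  have hBq : B.card < q := by
    rcases hBcase with h | ⟨h, h', _⟩
    · omega
    · omega
  obtain ⟨b₀, hb₀⟩ : ∃ b₀, b₀ ∉ B := by
    by_contra! h
    have : B = Finset.univ := Finset.eq_univ_iff_forall.2 h
    rw [this, Finset.card_univ] at hBq
    omega
  have hcp : ∀ b ∉ B, (p : ℤ) ∣ c b := by
    intro b hb
    simp only [hB, Finset.mem_filter, Finset.mem_univ, true_and, not_exists, not_not] at hb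
    obtain ⟨a₀⟩ := ‹Nonempty α›
    refine ⟨m a₀ b, ?_⟩
    simp only [hc]
    rw [Finset.sum_congr rfl (fun a _ => hb a a₀)]
    simp [hα]
  -- `g` measures the column sums from the sum `C` of a constant column; it vanishes off `B`
  set C := c b₀ with hC
  set g : β → ℤ := fun b => c b - C with hg
  have hWg : q * ∑ b, g b ^ 2 - (∑ b, g b) ^ 2 = Wq := by
    have := spread_shift c C
    rw [hcd, hβ] at this
    change q * ∑ b, c b ^ 2 = _ at hWq
    linarith
  have hsd : d = q * C + ∑ b, g b := by
    simp only [hg, Finset.sum_sub_distrib, hcd]; simp [hβ]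
  have hWq4' : Wq ≤ 4 * (q - 1) := by
    rcases hWq4 with h | h
    · linarith
    · exact h.1
  have hgB : ∀ b ∉ B, g b = 0 := by
    intro b hb
    by_contra hne
    have hpg : (p : ℤ) ∣ g b := dvd_sub (hcp b hb) (hcp b₀ hb₀)
    have h9 : 9 ≤ g b ^ 2 := by
      obtain ⟨t, ht⟩ := hpg
      have ht0 : t ≠ 0 := by rintro rfl; apply hne; simpa using ht
      have := sq_pos_of_ne_zero ht0
      have h1 : 9 ≤ (p : ℤ) ^ 2 := by nlinarith only [hp3']
      rw [ht, mul_pow]; nlinarith only [this, h1]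
    have h1 := card_mul_sq_le_spread c b b₀
    rw [hβ, hcd] at h1
    change q * g b ^ 2 ≤ _ at h1
    change q * ∑ b, c b ^ 2 = _ at hWq
    nlinarith only [h1, hWq, hWq4', h9, hq3']
  set s := ∑ b, g b with hs
  have hsB : s = ∑ b ∈ B, g b := by
    rw [hs]; symm
    exact Finset.sum_subset (Finset.subset_univ _) (fun b _ hb => hgB b hb)
  have hCS : s ^ 2 ≤ B.card * ∑ b, g b ^ 2 := by
    rw [hsB]
    refine (sq_sum_le_card_mul_sum_sq).trans ?_
    refine mul_le_mul_of_nonneg_left ?_ (Nat.cast_nonneg _)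
    exact Finset.sum_le_univ_sum_of_nonneg fun _ => sq_nonneg _
  have hps : (p : ℤ) ∣ s := by
    have h1 : s = d - q * C := by rw [hsd]; ring
    rw [h1]
    exact dvd_sub ⟨D, hD⟩ (Dvd.dvd.mul_left (hcp b₀ hb₀) _)
  suffices hs0 : s = 0 by
    rw [hsd, hs0, add_zero]; exact dvd_mul_right _ _
  have hG0 : 0 ≤ ∑ b, g b ^ 2 := Finset.sum_nonneg fun _ _ => sq_nonneg _
  set Q := ∑ b, g b ^ 2 with hQ
  have hs2 : Wq ≤ 3 * (q - 1) ∨ (2 : ℤ) ∣ s := by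
    rcases hWq4 with h | ⟨_, h⟩
    · exact Or.inl h
    · exact Or.inr (Finset.dvd_sum fun b _ => h b b₀)
  have hp2' : IsCoprime (2 : ℤ) p := by
    rw [Int.isCoprime_iff_gcd_eq_one]
    have := (Nat.coprime_primes Nat.prime_two hp).2 (Ne.symm hp2)
    exact_mod_cast this
  obtain ⟨t, ht⟩ := hps
  by_contra hs0
  have ht0 : t ≠ 0 := by rintro rfl; apply hs0; simpa using ht
  have ht1 := sq_pos_of_ne_zero ht0
  have hsp : (p : ℤ) ^ 2 ≤ s ^ 2 := by rw [ht, mul_pow]; nlinarith only [sq_nonneg (p : ℤ), ht1]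
  have hsp2 : (2 : ℤ) ∣ s → 4 * (p : ℤ) ^ 2 ≤ s ^ 2 := by
    intro h
    obtain ⟨u, hu⟩ := hp2'.mul_dvd h ⟨t, ht⟩
    have hu0 : u ≠ 0 := by rintro rfl; apply hs0; simpa using hu
    have := sq_pos_of_ne_zero hu0
    rw [hu, mul_pow, mul_pow]; nlinarith only [sq_nonneg (p : ℤ), this]
  have hp9 : 9 ≤ (p : ℤ) ^ 2 := by nlinarith only [hp3']
  rcases hBcase with h | ⟨h, hp3e, hW⟩
  · have h1 : s ^ 2 ≤ 2 * Q := hCS.trans (by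
      have : (B.card : ℤ) ≤ 2 := by exact_mod_cast h
      gcongr)
    have h2 : (q - 2) * s ^ 2 ≤ 2 * Wq := by
      have := mul_le_mul_of_nonneg_left h1 (show (0 : ℤ) ≤ q by omega)
      linarith
    have hmul : ∀ K : ℤ, K ≤ s ^ 2 → (q - 2) * K ≤ 2 * Wq := fun K hK =>
      (mul_le_mul_of_nonneg_left hK (by omega)).trans h2
    rcases hs2 with h3 | h3
    · by_cases hp3e : p = 3
      · have hq5 := hge5 q hq hq2 (by omega)
        have := hmul 9 (hp9.trans hsp)
        linarith
      · have hp5 := hge5 p hp hp2 hp3e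
        have := hmul 25 (le_trans (by nlinarith only [hp5]) hsp)
        linarith
    · have := hmul 36 (by linarith [hsp2 h3])
      linarith
  · have hq5 := hge5 q hq hq2 (by omega)
    have h1 : s ^ 2 ≤ 3 * Q := by
      rw [h] at hCS; exact_mod_cast hCS
    have h2 : (q - 3) * s ^ 2 ≤ 3 * Wq := by
      have := mul_le_mul_of_nonneg_left h1 (show (0 : ℤ) ≤ q by omega)
      linarith
    have hmul : ∀ K : ℤ, K ≤ s ^ 2 → (q - 3) * K ≤ 3 * Wq := fun K hK =>
      (mul_le_mul_of_nonneg_left hK (by omega)).trans h2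
    rcases hs2 with h3 | h3
    · rcases hW with h4 | h4
      · have := hmul 9 (hp9.trans hsp)
        linarith
      · have hWe : Wq = 3 * (q - 1) := le_antisymm h3 h4
        have hs9 : s ^ 2 = 9 * t ^ 2 := by rw [ht, hp3e]; push_cast; ring
        have ht2 : t ^ 2 = 1 := by
          by_contra hne
          have ht' : t ≤ -2 ∨ 2 ≤ t := by
            have h1 : t ≠ 1 := by rintro rfl; exact hne (by norm_num)
            have h2 : t ≠ -1 := by rintro rfl; exact hne (by norm_num)
            omega
          have ht4 : 4 ≤ t ^ 2 := by rcases ht' with h | h <;> nlinarith only [h]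
          have := hmul 36 (by linarith)
          linarith
        have h6 : (q : ℤ) * (Q - 3) = 6 := by
          rw [hs9, ht2, hWe] at hWg; linarith
        have h7 : (q : ℤ) ∣ 6 := ⟨_, h6.symm⟩
        have h8 : q ∣ 6 := by exact_mod_cast h7
        have h9 := Nat.le_of_dvd (by norm_num) h8
        have h10 : 5 ≤ q := by exact_mod_cast hq5
        interval_cases q
        · omega
        · exact absurd hq (by norm_num)
    · have := hmul 36 (by linarith [hsp2 h3])
      linarith

/-! ### Fourier transform of the multiplicity matrix -/

/-- The sum of the coefficients of `A` over the exponents congruent to `a` modulo `p` and to `b`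
modulo `q`. -/
def fibreSum (A : ℤ[X]) {p q : ℕ} (a : ZMod p) (b : ZMod q) : ℤ :=
  ∑ r ∈ A.support, if (r : ZMod p) = a ∧ (r : ZMod q) = b then A.coeff r else 0

open ZMod in
/-- The values of `A` at products of `p`-th and `q`-th roots of unity form the Fourier transform of
the matrix `fibreSum A` on `ZMod p × ZMod q`. -/
lemma aeval_stdAddChar_mul {p q : ℕ} [NeZero p] [NeZero q] (A : ℤ[X]) (j : ZMod p) (k : ZMod q) :
    aeval (stdAddChar j * stdAddChar k : ℂ) A =
      ∑ a, (∑ b, (fibreSum A a b : ℂ) * stdAddChar (b * k)) * stdAddChar (a * j) := by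
  have h1 : ∀ r : ℕ, ∀ c : ℂ, ∑ a : ZMod p, (∑ b : ZMod q,
      (if (r : ZMod p) = a ∧ (r : ZMod q) = b then c else 0) * stdAddChar (b * k)) *
        stdAddChar (a * j) = c * (stdAddChar j * stdAddChar k) ^ r := by
    intro r c
    rw [Finset.sum_eq_single (r : ZMod p), Finset.sum_eq_single (r : ZMod q)]
    · rw [if_pos ⟨rfl, rfl⟩, mul_pow, ← AddChar.map_nsmul_eq_pow, ← AddChar.map_nsmul_eq_pow,
        nsmul_eq_mul, nsmul_eq_mul]
      ring
    · intro b _ hb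
      rw [if_neg (fun h => hb h.2.symm), zero_mul]
    · simp
    · intro a _ ha
      rw [Finset.sum_eq_zero, zero_mul]
      intro b _
      rw [if_neg (fun h => ha h.1.symm), zero_mul]
    · simp
  rw [aeval_def, eval₂_eq_sum, Polynomial.sum]
  simp only [fibreSum, Int.cast_sum, Int.cast_ite, Int.cast_zero, Finset.sum_mul]
  simp only [Finset.sum_comm (s := (Finset.univ : Finset (ZMod q)))]
  rw [Finset.sum_comm]
  refine Finset.sum_congr rfl fun r _ => ?_
  rw [eq_intCast, ← h1 r (A.coeff r)]
  simp only [Finset.sum_mul]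

open ZMod in
/-- If all nontrivial Fourier coefficients of `c` are twice algebraic integers, then so is `q` times
any difference of values of `c`, by Fourier inversion: the trivial coefficient cancels in the
difference. -/
lemma exists_integral_half_sub {q : ℕ} [NeZero q] (c : ZMod q → ℂ)
    (h : ∀ k : ZMod q, k ≠ 0 → ∃ w : ℂ, IsIntegral ℤ w ∧ ∑ b, c b * stdAddChar (b * k) = 2 * w)
    (b b' : ZMod q) : ∃ w : ℂ, IsIntegral ℤ w ∧ q * (c b - c b') = 2 * w := by
  have h' : ∀ k : ZMod q, ∃ w : ℂ, IsIntegral ℤ w ∧ (∑ b, c b * stdAddChar (b * k)) *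
      (stdAddChar (-(b * k)) - stdAddChar (-(b' * k))) = 2 * w := by
    intro k
    by_cases hk : k = 0
    · exact ⟨0, isIntegral_zero, by simp [hk]⟩
    · obtain ⟨w, hw, e⟩ := h k hk
      exact ⟨w * (stdAddChar (-(b * k)) - stdAddChar (-(b' * k))),
        hw.mul ((isIntegral_stdAddChar _).sub (isIntegral_stdAddChar _)), by rw [e]; ring⟩
  choose w hw e using h'
  refine ⟨∑ k, w k, IsIntegral.sum _ fun k _ => hw k, ?_⟩
  rw [Finset.mul_sum, ← Finset.sum_congr rfl fun k _ => e k]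
  simp only [mul_sub, Finset.sum_sub_distrib, fourier_inversion]

open ZMod in
lemma two_dvd_double_difference {p q : ℕ} [NeZero p] [NeZero q] (hp : Odd p) (hq : Odd q)
    (m : ZMod p → ZMod q → ℤ)
    (h : ∀ j : ZMod p, ∀ k : ZMod q, j ≠ 0 → k ≠ 0 → ∃ w : ℂ, IsIntegral ℤ w ∧
      ∑ a, (∑ b, (m a b : ℂ) * stdAddChar (b * k)) * stdAddChar (a * j) = 2 * w)
    (a a' : ZMod p) (b b' : ZMod q) : 2 ∣ (m a b - m a' b) - (m a b' - m a' b') := by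
  have h1 : ∀ k : ZMod q, k ≠ 0 → ∃ w : ℂ, IsIntegral ℤ w ∧
      ∑ b, ((p * (m a b - m a' b) : ℂ)) * stdAddChar (b * k) = 2 * w := by
    intro k hk
    obtain ⟨w, hw, e⟩ := exists_integral_half_sub
      (fun a => ∑ b, (m a b : ℂ) * stdAddChar (b * k)) (fun j hj => h j k hj hk) a a'
    refine ⟨w, hw, ?_⟩
    rw [← e, ← Finset.sum_sub_distrib, Finset.mul_sum]
    exact Finset.sum_congr rfl fun b _ => by ring
  obtain ⟨w, hw, e⟩ := exists_integral_half_sub _ h1 b b'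
  have h2 : 2 ∣ (q * p : ℤ) * ((m a b - m a' b) - (m a b' - m a' b')) :=
    two_dvd_of_eq_two_mul_isIntegral hw (by rw [← e]; push_cast; ring)
  refine (Int.isCoprime_iff_gcd_eq_one.2 ?_).dvd_of_dvd_mul_left h2
  have : Odd (q * p : ℤ) := by exact_mod_cast hq.mul hp
  exact Int.isCoprime_iff_gcd_eq_one.1 (Int.isCoprime_two_left.2 this)

open ZMod in
lemma two_dvd_difference {q : ℕ} [NeZero q] (hq : Odd q) (c : ZMod q → ℤ)
    (h : ∀ k : ZMod q, k ≠ 0 → ∃ w : ℂ, IsIntegral ℤ w ∧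
      ∑ b, (c b : ℂ) * stdAddChar (b * k) = 2 * w)
    (b b' : ZMod q) : 2 ∣ c b - c b' := by
  obtain ⟨w, hw, e⟩ := exists_integral_half_sub _ h b b'
  have h2 : 2 ∣ (q : ℤ) * (c b - c b') :=
    two_dvd_of_eq_two_mul_isIntegral hw (by rw [← e]; push_cast; ring)
  have : Odd (q : ℤ) := by exact_mod_cast hq
  exact (Int.isCoprime_two_left.2 this).dvd_of_dvd_mul_left h2

lemma sum_sum_eq_erase {α β : Type*} [Fintype α] [Fintype β] [DecidableEq α] [DecidableEq β]
    (g : α → β → ℝ) (a₀ : α) (b₀ : β) :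
    ∑ a, ∑ b, g a b = g a₀ b₀ + ∑ a ∈ Finset.univ.erase a₀, g a b₀ +
      ∑ b ∈ Finset.univ.erase b₀, g a₀ b +
      ∑ a ∈ Finset.univ.erase a₀, ∑ b ∈ Finset.univ.erase b₀, g a b := by
  have h : ∀ a, ∑ b, g a b = g a b₀ + ∑ b ∈ Finset.univ.erase b₀, g a b := fun a =>
    (Finset.add_sum_erase _ _ (Finset.mem_univ _)).symm
  rw [← Finset.add_sum_erase _ _ (Finset.mem_univ a₀)]
  simp only [h, Finset.sum_add_distrib]
  ring

open ZMod in
lemma parseval_two {p q : ℕ} [NeZero p] [NeZero q] (m : ZMod p → ZMod q → ℤ) :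
    ∑ j : ZMod p, ∑ k : ZMod q,
      ‖∑ a, (∑ b, (m a b : ℂ) * stdAddChar (b * k)) * stdAddChar (a * j)‖ ^ 2 =
      p * q * ∑ a, ∑ b, (m a b : ℝ) ^ 2 := by
  rw [Finset.sum_comm]
  simp only [parseval]
  rw [← Finset.mul_sum, Finset.sum_comm]
  simp only [parseval, Complex.norm_intCast, sq_abs]
  rw [← Finset.mul_sum, mul_assoc]

open ZMod in
lemma exists_stdAddChar_eq {q : ℕ} [NeZero q] (hq : q.Prime) {μ : ℂ}
    (hμ : μ ∈ primitiveRoots q ℂ) : ∃ k : ZMod q, k ≠ 0 ∧ stdAddChar k = μ := by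
  rw [← image_stdAddChar hq] at hμ
  obtain ⟨k, hk, rfl⟩ := Finset.mem_image.1 hμ
  exact ⟨k, Finset.ne_of_mem_erase hk, rfl⟩

open ZMod in
lemma exists_stdAddChar_mul_eq {p q : ℕ} [NeZero p] [NeZero q] (hp : p.Prime) (hq : q.Prime)
    (hpq : p ≠ q) {μ : ℂ} (hμ : μ ∈ primitiveRoots (p * q) ℂ) :
    ∃ (j : ZMod p) (k : ZMod q), j ≠ 0 ∧ k ≠ 0 ∧ stdAddChar j * stdAddChar k = μ := by
  rw [← image_stdAddChar_mul hp hq hpq] at hμ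
  obtain ⟨x, hx, rfl⟩ := Finset.mem_image.1 hμ
  have hx' := Finset.mem_product.1 hx
  exact ⟨x.1, x.2, Finset.ne_of_mem_erase hx'.1, Finset.ne_of_mem_erase hx'.2, rfl⟩

open ZMod in
/-- Suppose `p = 3` and all Fourier coefficients `F j k` with `j, k ≠ 0` have squared modulus `3`.
Parseval in the first variable gives `|F 0 k|² / 3 = ∑ a, |R a k|² - 2`, where `R a k` is the
Fourier transform of row `a`. So `|F 0 k|² / 3` is a totally nonnegative cyclotomic integer, to
which `cyclotomic_trace_bound` applies. -/
lemma trace_eq_zero_or_ge {q : ℕ} [NeZero q] (hq : q.Prime) {p : ℕ} [NeZero p] (hp3 : p = 3)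
    (m : ZMod p → ZMod q → ℤ) (A : ℤ[X])
    (hA : ∀ k : ZMod q, aeval (stdAddChar k : ℂ) A =
      ∑ a, (∑ b, (m a b : ℂ) * stdAddChar (b * k)) * stdAddChar (a * (0 : ZMod p)))
    (h3 : ∀ j : ZMod p, ∀ k : ZMod q, j ≠ 0 → k ≠ 0 →
      ‖∑ a, (∑ b, (m a b : ℂ) * stdAddChar (b * k)) * stdAddChar (a * j)‖ ^ 2 = 3) :
    ∑ k ∈ Finset.univ.erase (0 : ZMod q), ‖aeval (stdAddChar k : ℂ) A‖ ^ 2 = 0 ∨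
      3 * ((q : ℝ) - 1) ≤
        ∑ k ∈ Finset.univ.erase (0 : ZMod q), ‖aeval (stdAddChar k : ℂ) A‖ ^ 2 := by
  let B : ZMod p → ℤ[X] := fun a => ∑ b : ZMod q, C (m a b) * X ^ b.val
  have hB : ∀ a k, aeval (stdAddChar k : ℂ) (B a) = ∑ b, (m a b : ℂ) * stdAddChar (b * k) := by
    intro a k
    simp only [B, map_sum, map_mul, map_pow, aeval_X, aeval_C]
    refine Finset.sum_congr rfl fun b _ => ?_
    rw [← AddChar.map_nsmul_eq_pow, nsmul_eq_mul, ZMod.natCast_val, ZMod.cast_id]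
    rfl
  have hkey : ∀ k : ZMod q, k ≠ 0 →
      ∑ a, ‖aeval (stdAddChar k : ℂ) (B a)‖ ^ 2 - 2 = ‖aeval (stdAddChar k : ℂ) A‖ ^ 2 / 3 := by
    intro k hk
    have h := parseval (fun a => ∑ b, (m a b : ℂ) * stdAddChar (b * k))
    rw [← Finset.add_sum_erase _ _ (Finset.mem_univ (0 : ZMod p)), ← hA k,
      Finset.sum_congr rfl (fun j hj => h3 j k (Finset.ne_of_mem_erase hj) hk), Finset.sum_const,
      Finset.card_erase_of_mem (Finset.mem_univ _), Finset.card_univ, ZMod.card] at h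
    simp only [← hB] at h
    have e1 : (p : ℝ) = 3 := by exact_mod_cast hp3
    have e2 : p - 1 = 2 := by omega
    rw [e1, e2] at h
    norm_num at h
    linarith
  rw [← sum_primitiveRoots_prime hq (fun μ => ‖aeval μ A‖ ^ 2)]
  rcases cyclotomic_trace_bound hq.pos (∑ a, B a * (B a).comp (X ^ (q - 1)) - 2)
    (fun μ => ‖aeval μ A‖ ^ 2 / 3) (fun μ hμ => by
      obtain ⟨k, hk, rfl⟩ := exists_stdAddChar_eq hq hμ
      rw [map_sub, map_sum, Finset.sum_congr rfl fun a _ => aeval_mul_comp_eq_normSq hq.pos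
        ((mem_primitiveRoots hq.pos).1 hμ).pow_eq_one (B a), ← hkey k hk, map_ofNat]
      push_cast; rfl) (fun μ _ => by positivity) with h | ⟨h, -⟩
  · left
    exact Finset.sum_eq_zero fun μ hμ => by linarith [h μ hμ]
  · right
    rw [← Finset.sum_div, Nat.totient_prime hq, Nat.cast_sub hq.one_le] at h
    push_cast at h
    linarith

/-! ### Propagation of divisibility along edges of the prime graph -/

open ZMod in
/-- Polynomial form of the theorem: if the values of `A` at the nontrivial `p q`-th roots of unity
are sums of at most two roots of unity and `p` divides `d = A(1)`, then `q` divides `d`. The matrix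
`fibreSum A` satisfies the hypotheses of `dvd_of_moments`: its moments are sums of `|A|²` by
Parseval, and these are controlled by `norm_sq_trace_dichotomy`. -/
lemma dvd_of_aeval {p q : ℕ} [NeZero p] [NeZero q] (hp : p.Prime) (hq : q.Prime)
    (hp2 : p ≠ 2) (hq2 : q ≠ 2) (hpq : p ≠ q) (A : ℤ[X]) (d : ℤ) (hd : aeval (1 : ℂ) A = d)
    (hA : ∀ j : ZMod p, ∀ k : ZMod q, (j ≠ 0 ∨ k ≠ 0) →
      IsSumAtMostTwoRootsOfUnity (aeval (stdAddChar j * stdAddChar k : ℂ) A))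
    (hpd : (p : ℤ) ∣ d) : (q : ℤ) ∣ d := by
  have hcop := (Nat.coprime_primes hp hq).2 hpq
  have hp1 : (1 : ℝ) ≤ p := by exact_mod_cast hp.one_le
  have hq1 : (1 : ℝ) ≤ q := by exact_mod_cast hq.one_le
  let F : ZMod p → ZMod q → ℂ := fun j k => aeval (stdAddChar j * stdAddChar k : ℂ) A
  let m : ZMod p → ZMod q → ℤ := fun a b => fibreSum A a b
  have hF : ∀ j k, F j k = ∑ a, (∑ b, (m a b : ℂ) * stdAddChar (b * k)) * stdAddChar (a * j) :=
    fun j k => aeval_stdAddChar_mul A j k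
  have hF00 : F 0 0 = d := by simp [F, hd]
  have hF0 : ∀ k, F 0 k = ∑ b, ((∑ a, m a b : ℤ) : ℂ) * stdAddChar (b * k) := by
    intro k
    rw [hF, Finset.sum_congr rfl fun a _ => by rw [mul_zero, AddChar.map_zero_eq_one, mul_one],
      Finset.sum_comm]
    refine Finset.sum_congr rfl fun b _ => ?_
    rw [← Finset.sum_mul]; push_cast; rfl
  have hF0' : ∀ j, F j 0 = ∑ a, ((∑ b, m a b : ℤ) : ℂ) * stdAddChar (a * j) := by
    intro j
    rw [hF]
    simp
  have hnorm : ∀ j k, (j ≠ 0 ∨ k ≠ 0) → ‖F j k‖ ^ 2 ≤ 4 := fun j k h => by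
    nlinarith only [(hA j k h).norm_le, norm_nonneg (F j k)]
  have hdm : d = ∑ a, ∑ b, m a b := by
    have h := hF0' 0
    rw [hF00] at h
    simp only [mul_zero, AddChar.map_zero_eq_one, mul_one] at h
    exact_mod_cast h
  -- second moments by Parseval, with the term `d ^ 2` at the origin split off
  have hWp : (p : ℝ) * ∑ a, ((∑ b, m a b : ℤ) : ℝ) ^ 2 =
      d ^ 2 + ∑ j ∈ Finset.univ.erase (0 : ZMod p), ‖F j 0‖ ^ 2 := by
    have h := parseval (fun a : ZMod p => ((∑ b, m a b : ℤ) : ℂ))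
    simp only [← hF0', Complex.norm_intCast, sq_abs] at h
    rw [← h, ← Finset.add_sum_erase _ _ (Finset.mem_univ (0 : ZMod p)), hF00,
      Complex.norm_intCast, sq_abs]
  have hWq : (q : ℝ) * ∑ b, ((∑ a, m a b : ℤ) : ℝ) ^ 2 =
      d ^ 2 + ∑ k ∈ Finset.univ.erase (0 : ZMod q), ‖F 0 k‖ ^ 2 := by
    have h := parseval (fun b : ZMod q => ((∑ a, m a b : ℤ) : ℂ))
    simp only [← hF0, Complex.norm_intCast, sq_abs] at h
    rw [← h, ← Finset.add_sum_erase _ _ (Finset.mem_univ (0 : ZMod q)), hF00,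
      Complex.norm_intCast, sq_abs]
  have hS : (p : ℝ) * q * ∑ a, ∑ b, (m a b : ℝ) ^ 2 =
      d ^ 2 + ∑ j ∈ Finset.univ.erase (0 : ZMod p), ‖F j 0‖ ^ 2 +
        ∑ k ∈ Finset.univ.erase (0 : ZMod q), ‖F 0 k‖ ^ 2 +
        ∑ j ∈ Finset.univ.erase (0 : ZMod p), ∑ k ∈ Finset.univ.erase (0 : ZMod q),
          ‖F j k‖ ^ 2 := by
    rw [← parseval_two m]
    simp only [← hF]
    rw [sum_sum_eq_erase (fun j k => ‖F j k‖ ^ 2) 0 0, hF00, Complex.norm_intCast, sq_abs]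
  obtain ⟨Wp, hWp'⟩ : ∃ W : ℤ, ∑ j ∈ Finset.univ.erase (0 : ZMod p), ‖F j 0‖ ^ 2 = W :=
    ⟨p * ∑ a, (∑ b, m a b) ^ 2 - d ^ 2, by push_cast at hWp ⊢; linarith⟩
  obtain ⟨Wq, hWq'⟩ : ∃ W : ℤ, ∑ k ∈ Finset.univ.erase (0 : ZMod q), ‖F 0 k‖ ^ 2 = W :=
    ⟨q * ∑ b, (∑ a, m a b) ^ 2 - d ^ 2, by push_cast at hWq ⊢; linarith⟩
  obtain ⟨S, hS'⟩ : ∃ W : ℤ, ∑ j ∈ Finset.univ.erase (0 : ZMod p),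
      ∑ k ∈ Finset.univ.erase (0 : ZMod q), ‖F j k‖ ^ 2 = W :=
    ⟨p * q * ∑ a, ∑ b, m a b ^ 2 - d ^ 2 - Wp - Wq, by
      push_cast; rw [hWp', hWq'] at hS; linarith⟩
  rw [hWp'] at hWp hS
  rw [hWq'] at hWq hS
  rw [hS'] at hS
  have hcardp : ((Finset.univ.erase (0 : ZMod p)).card : ℝ) = p - 1 := by
    rw [Finset.card_erase_of_mem (Finset.mem_univ _), Finset.card_univ, ZMod.card,
      Nat.cast_sub hp.one_le, Nat.cast_one]
  have hcardq : ((Finset.univ.erase (0 : ZMod q)).card : ℝ) = q - 1 := by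
    rw [Finset.card_erase_of_mem (Finset.mem_univ _), Finset.card_univ, ZMod.card,
      Nat.cast_sub hq.one_le, Nat.cast_one]
  have hWp4 : (Wp : ℝ) ≤ 4 * (p - 1) := by
    rw [← hWp', ← hcardp, mul_comm, ← nsmul_eq_mul]
    exact Finset.sum_le_card_nsmul _ _ _ fun j hj =>
      hnorm j 0 (Or.inl (Finset.ne_of_mem_erase hj))
  have hWq4 : (Wq : ℝ) ≤ 4 * (q - 1) := by
    rw [← hWq', ← hcardq, mul_comm, ← nsmul_eq_mul]
    exact Finset.sum_le_card_nsmul _ _ _ fun k hk =>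
      hnorm 0 k (Or.inr (Finset.ne_of_mem_erase hk))
  have hF0A : ∀ k, F 0 k = aeval (stdAddChar k : ℂ) A := fun k => by simp [F]
  have hprim_q : ∀ {k : ZMod q}, k ≠ 0 → (stdAddChar k : ℂ) ∈ primitiveRoots q ℂ := fun hk =>
    (mem_primitiveRoots hq.pos).2 (isPrimitiveRoot_stdAddChar hq hk)
  have hprim_pq : ∀ {j : ZMod p} {k : ZMod q}, j ≠ 0 → k ≠ 0 →
      (stdAddChar j * stdAddChar k : ℂ) ∈ primitiveRoots (p * q) ℂ := fun hj hk =>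
    (mem_primitiveRoots (Nat.mul_pos hp.pos hq.pos)).2
      (isPrimitiveRoot_stdAddChar_mul hp hq hpq hj hk)
  have hodd_p : Odd p := hp.odd_of_ne_two hp2
  have hodd_q : Odd q := hq.odd_of_ne_two hq2
  have hle_q : ∀ μ ∈ primitiveRoots q ℂ, ‖aeval μ A‖ ≤ 2 := by
    intro μ hμ
    obtain ⟨k, hk, rfl⟩ := exists_stdAddChar_eq hq hμ
    rw [← hF0A]
    exact (hA 0 k (Or.inr hk)).norm_le
  have hle_pq : ∀ μ ∈ primitiveRoots (p * q) ℂ, ‖aeval μ A‖ ≤ 2 := by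
    intro μ hμ
    obtain ⟨j, k, hj, hk, rfl⟩ := exists_stdAddChar_mul_eq hp hq hpq hμ
    exact (hA j k (Or.inr hk)).norm_le
  have hWq_alt : Wq ≤ 3 * ((q : ℤ) - 1) ∨
      (Wq ≤ 4 * ((q : ℤ) - 1) ∧ ∀ b b', 2 ∣ ∑ a, m a b - ∑ a, m a b') := by
    rcases norm_sq_trace_dichotomy hq.pos A hle_q with h | ⟨h, -⟩
    · right
      refine ⟨by exact_mod_cast hWq4, two_dvd_difference hodd_q (fun b => ∑ a, m a b) ?_⟩
      intro k hk
      rw [← hF0]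
      exact (hA 0 k (Or.inr hk)).exists_of_norm_eq_two
        ((congrArg norm (hF0A k)).trans (h _ (hprim_q hk)))
    · left
      rw [sum_primitiveRoots_prime hq (fun μ => ‖aeval μ A‖ ^ 2)] at h
      simp only [← hF0A] at h
      rw [hWq', Nat.totient_prime hq, Nat.cast_sub hq.one_le] at h
      exact_mod_cast h
  have hS_alt : S < 3 * ((p : ℤ) - 1) * (q - 1) ∨
      (S = 3 * ((p : ℤ) - 1) * (q - 1) ∧ (p = 3 → Wq = 0 ∨ 3 * ((q : ℤ) - 1) ≤ Wq)) ∨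
      (S = 4 * ((p : ℤ) - 1) * (q - 1) ∧
        ∀ a a' b b', 2 ∣ (m a b - m a' b) - (m a b' - m a' b')) := by
    have htot : ((p * q).totient : ℝ) = (p - 1) * (q - 1) := by
      rw [Nat.totient_mul hcop, Nat.totient_prime hq, Nat.totient_prime hp, Nat.cast_mul,
        Nat.cast_sub hq.one_le, Nat.cast_sub hp.one_le, Nat.cast_one]
    have hconst : ∀ c : ℝ, (∀ j k, j ≠ 0 → k ≠ 0 → ‖F j k‖ ^ 2 = c) →
        (S : ℝ) = c * (p - 1) * (q - 1) := by
      intro c hc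
      rw [← hS', Finset.sum_congr rfl fun j hj => Finset.sum_congr rfl fun k hk =>
        hc j k (Finset.ne_of_mem_erase hj) (Finset.ne_of_mem_erase hk)]
      simp only [Finset.sum_const, nsmul_eq_mul, hcardp, hcardq]
      ring
    rcases norm_sq_trace_dichotomy (Nat.mul_pos hp.pos hq.pos) A hle_pq with h | ⟨h, h3⟩
    · right; right
      constructor
      · have := hconst 4 fun j k hj hk => by
          rw [show ‖F j k‖ = 2 from h _ (hprim_pq hj hk)]; norm_num
        exact_mod_cast this
      · refine two_dvd_double_difference hodd_p hodd_q m fun j k hj hk => ?_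
        rw [← hF]
        exact (hA j k (Or.inl hj)).exists_of_norm_eq_two (h _ (hprim_pq hj hk))
    · rw [sum_primitiveRoots_mul hp hq hpq (fun μ => ‖aeval μ A‖ ^ 2), htot] at h h3
      have h' : (S : ℝ) ≤ 3 * ((p - 1) * (q - 1)) := hS' ▸ h
      rcases h'.lt_or_eq with hlt | heq
      · left
        rw [← mul_assoc] at hlt
        exact_mod_cast hlt
      · right; left
        have h3' := h3 (by rw [← heq, ← hS'])
        rw [← mul_assoc] at heq
        refine ⟨by exact_mod_cast heq, fun hp3 => ?_⟩
        have := trace_eq_zero_or_ge hq hp3 m A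
          (fun k => by rw [← hF0A, hF]) (fun j k hj hk => by
            rw [← hF]; exact h3' _ (hprim_pq hj hk))
        simp only [← hF0A] at this
        rw [hWq'] at this
        exact_mod_cast this
  exact dvd_of_moments m p q hp hq (ZMod.card p) (ZMod.card q) hp2 hq2 hpq d hdm hpd Wp Wq S
    (by exact_mod_cast hWp) (by exact_mod_cast hWq) (by exact_mod_cast hS)
    (by exact_mod_cast hWp4) hWq_alt hS_alt

open ZMod in
/-- An odd prime adjacent in the prime graph to an odd prime divisor of `d` divides `d` as well.
This is `dvd_of_aeval` for a polynomial computing `χ` on the powers of an element of order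
`p * q`. -/
lemma dvd_of_orderOf_eq {G : Type} [Group G] {χ : G → ℂ} (hχ : IsGenChar G χ)
    {d : ℤ} (hd : (d : ℂ) = χ 1)
    (hval : ∀ x : G, x ≠ 1 → IsSumAtMostTwoRootsOfUnity (χ x))
    {p q : ℕ} (hp : p.Prime) (hq : q.Prime) (hp2 : p ≠ 2) (hq2 : q ≠ 2) (hpq : p ≠ q)
    {x : G} (hx : orderOf x = p * q) (hpd : (p : ℤ) ∣ d) : (q : ℤ) ∣ d := by
  have : NeZero p := ⟨hp.ne_zero⟩
  have : NeZero q := ⟨hq.ne_zero⟩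
  have : Fact (1 < p) := ⟨hp.one_lt⟩
  have : Fact (1 < q) := ⟨hq.one_lt⟩
  have hcop := (Nat.coprime_primes hp hq).2 hpq
  obtain ⟨V, W, hVW⟩ := hχ
  have hζ := isPrimitiveRoot_stdAddChar_mul hp hq hpq (one_ne_zero (α := ZMod p))
    (one_ne_zero (α := ZMod q))
  have hx1 : x ^ (p * q) = 1 := by rw [← hx, pow_orderOf_eq_one]
  obtain ⟨AV, hAV⟩ := exists_poly_of_genChar G V x (Nat.mul_pos hp.pos hq.pos) hx1 hζ
  obtain ⟨AW, hAW⟩ := exists_poly_of_genChar G W x (Nat.mul_pos hp.pos hq.pos) hx1 hζ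
  have hA : ∀ i : ℕ, χ (x ^ i) =
      aeval ((stdAddChar (1 : ZMod p) * stdAddChar (1 : ZMod q) : ℂ) ^ i) (AV - AW) := by
    intro i
    rw [hVW, hAV, hAW, map_sub]
  refine dvd_of_aeval hp hq hp2 hq2 hpq (AV - AW) d ?_ ?_ hpd
  · have := hA 0
    rw [pow_zero, pow_zero] at this
    rw [hd, this]
  · intro j k hjk
    obtain ⟨i, hi1, hi2⟩ := Nat.chineseRemainder hcop j.val k.val
    have e1 : (i : ZMod p) = j := by
      rw [(ZMod.natCast_eq_natCast_iff _ _ _).2 hi1, ZMod.natCast_zmod_val]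
    have e2 : (i : ZMod q) = k := by
      rw [(ZMod.natCast_eq_natCast_iff _ _ _).2 hi2, ZMod.natCast_zmod_val]
    have e : (stdAddChar j * stdAddChar k : ℂ) =
        (stdAddChar (1 : ZMod p) * stdAddChar (1 : ZMod q) : ℂ) ^ i := by
      rw [mul_pow, ← AddChar.map_nsmul_eq_pow, ← AddChar.map_nsmul_eq_pow, nsmul_one, nsmul_one,
        e1, e2]
    rw [e, ← hA]
    refine hval _ fun h => ?_
    have hdvd : p * q ∣ i := hx ▸ orderOf_dvd_of_pow_eq_one h
    rcases hjk with hj | hk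
    · exact hj (e1 ▸ (ZMod.natCast_eq_zero_iff _ _).2 (dvd_of_mul_right_dvd hdvd))
    · exact hk (e2 ▸ (ZMod.natCast_eq_zero_iff _ _).2 (dvd_of_mul_left_dvd hdvd))

theorem stmt_15 (G : Type) [Group G] [Fintype G]
    (χ : G → ℂ) (hχ : IsGenChar G χ)
    (d : ℤ) (hd : (d : ℂ) = χ 1)
    (hval : ∀ x : G, x ≠ 1 → IsSumAtMostTwoRootsOfUnity (χ x))
    (p₀ p₁ p₂ : ℕ) (hp₀ : p₀.Prime) (hp₁ : p₁.Prime) (hp₂ : p₂.Prime)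
    (hp₀G : p₀ ∣ Fintype.card G) (hp₁G : p₁ ∣ Fintype.card G) (hp₂G : p₂ ∣ Fintype.card G)
    (hp₀5 : 5 ≤ p₀) (hp₁5 : 5 ≤ p₁) (hp₂5 : 5 ≤ p₂)
    (hd0 : (p₀ : ℤ) ∣ d)
    (hd1 : (p₁ : ℤ) ∣ d - 1 ∨ (p₁ : ℤ) ∣ d + 1)
    (hd2 : (p₂ : ℤ) ∣ d - 2 ∨ (p₂ : ℤ) ∣ d + 2) :
    ∃ S T : Set ℕ, S.Nonempty ∧ T.Nonempty ∧ Disjoint S T ∧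
      S ∪ T = {p : ℕ | p.Prime ∧ p ∣ Fintype.card G ∧ p ≠ 2} ∧
      ∀ p ∈ S, ∀ q ∈ T, ¬ ∃ g : G, orderOf g = p * q := by
  refine ⟨{p | (p.Prime ∧ p ∣ Fintype.card G ∧ p ≠ 2) ∧ (p : ℤ) ∣ d},
    {p | (p.Prime ∧ p ∣ Fintype.card G ∧ p ≠ 2) ∧ ¬ (p : ℤ) ∣ d},
    ⟨p₀, ⟨hp₀, hp₀G, by omega⟩, hd0⟩, ⟨p₁, ⟨hp₁, hp₁G, by omega⟩, fun h => ?_⟩,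
    Set.disjoint_left.2 fun p h h' => h'.2 h.2, ?_, ?_⟩
  · have hunit : (p₁ : ℤ) ∣ 1 := by
      rcases hd1 with h1 | h1
      · simpa using dvd_sub h h1
      · simpa using dvd_sub h1 h
    have := Int.le_of_dvd one_pos hunit
    omega
  · ext p
    simp only [Set.mem_union, Set.mem_ofPred_eq]
    tauto
  · rintro p ⟨⟨hp, -, hp2⟩, hpd⟩ q ⟨⟨hq, -, hq2⟩, hqd⟩ ⟨g, hg⟩
    exact hqd (dvd_of_orderOf_eq hχ hd hval hp hq hp2 hq2 (fun h => hqd (h ▸ hpd)) hg hpd)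
end

section
/- Let G = SL(2,3), the group of 2×2 matrices of determinant 1 over the field with 3 elements, and let P be a Sylow 3-subgroup of G. Consider the action of G by left multiplication on the set of left cosets G/P. Then for every nonidentity g ∈ G, the number of cosets in G/P fixed by g is either 0 or 2; in particular, no nonidentity element of G fixes exactly one coset. -/
/-!
The group `SL(2,3)` has order 24, so `P` has order 3. If a nonidentity `g` fixes `xP`, then
`x⁻¹gx` is a nonidentity element of `P`, so it generates `P` and `g` has order 3. A coset `yP` is
then fixed exactly when `z = yx⁻¹` conjugates `g` to `g` or `g⁻¹`, that is, when `z` normalizes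
`⟨g⟩`. The normalizer of a subgroup of order 3 in `SL(2,3)` is that subgroup times `{±1}`
(`eq_of_conj`, a finite check), so the fixed cosets are `xP` and `-xP`. They differ because `-1`
has order 2 and so is not in `P`.
-/

local notation "SL23" => Matrix.SpecialLinearGroup (Fin 2) (ZMod 3)

lemma card_SL23 : Nat.card SL23 = 24 := by
  rw [Nat.card_eq_fintype_card]
  decide +kernel

lemma card_sylow (P : Sylow 3 SL23) : Nat.card P = 3 := by
  have h24 : Nat.factorization 24 3 = 1 := by
    rw [Nat.factorization_def _ Nat.prime_three, show 24 = 3 * 8 by norm_num,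
      padicValNat.mul (by norm_num) (by norm_num), padicValNat.self (by norm_num),
      padicValNat.eq_zero_of_not_dvd (by norm_num)]
  rw [P.card_eq_multiplicity, card_SL23, h24, pow_one]

/-- The normalizer of the subgroup generated by an element `g` of order 3 is `{±1, ±g, ±g⁻¹}`. -/
lemma eq_of_conj : ∀ g : SL23, g ^ 3 = 1 → g ≠ 1 → ∀ z : SL23,
    (z⁻¹ * g * z = g ∨ z⁻¹ * g * z = g⁻¹) →
    (z = 1 ∨ z = g ∨ z = g⁻¹) ∨ (z = -1 ∨ z = -g ∨ z = -g⁻¹) := by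
  decide +kernel

lemma pow_three_of_mem {G : Type*} [Group G] {P : Subgroup G} (hP : Nat.card P = 3) {h : G}
    (hh : h ∈ P) : h ^ 3 = 1 := by
  have := pow_card_eq_one' (x := (⟨h, hh⟩ : P))
  rw [hP] at this
  simpa using congrArg Subtype.val this

/-- In a group of order 3, the elements other than `1` are any one of them and its inverse. -/
lemma mem_order_three {G : Type*} [Group G] {P : Subgroup G} (hP : Nat.card P = 3) {h k : G}
    (hh : h ∈ P) (h1 : h ≠ 1) (hk : k ∈ P) (k1 : k ≠ 1) : k = h ∨ k = h⁻¹ := by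
  have : Fact (Nat.Prime 3) := ⟨Nat.prime_three⟩
  have hmem : (⟨k, hk⟩ : P) ∈ Subgroup.zpowers (⟨h, hh⟩ : P) :=
    mem_zpowers_of_prime_card hP (by simpa [Subtype.ext_iff] using h1)
  obtain ⟨n, hn⟩ := Subgroup.mem_zpowers_iff.1 hmem
  have hn' : h ^ n = k := by simpa using congrArg Subtype.val hn
  have h3 : h ^ (3 : ℤ) = 1 := by
    exact_mod_cast pow_three_of_mem hP hh
  have hred : h ^ n = h ^ (n % 3) := by
    conv_lhs => rw [← Int.emod_add_mul_ediv n 3, zpow_add, zpow_mul, h3, one_zpow, mul_one]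
  rcases (by omega : n % 3 = 0 ∨ n % 3 = 1 ∨ n % 3 = 2) with e | e | e
  · exact absurd (by rw [← hn', hred, e, zpow_zero]) k1
  · left; rw [← hn', hred, e, zpow_one]
  · right
    rw [← hn', hred, e, eq_inv_iff_mul_eq_one, ← zpow_add_one]
    exact h3

theorem stmt_19 (P : Sylow 3 (Matrix.SpecialLinearGroup (Fin 2) (ZMod 3)))
    (g : Matrix.SpecialLinearGroup (Fin 2) (ZMod 3)) (hg : g ≠ 1) :
    Nat.card {x : Matrix.SpecialLinearGroup (Fin 2) (ZMod 3) ⧸ (P : Subgroup _) // g • x = x} = 0 ∨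
    Nat.card {x : Matrix.SpecialLinearGroup (Fin 2) (ZMod 3) ⧸ (P : Subgroup _) // g • x = x} = 2 := by
  have hP := card_sylow P
  have fix_iff : ∀ y : SL23, g • (y : SL23 ⧸ (P : Subgroup SL23)) = y ↔
      y⁻¹ * g * y ∈ (P : Subgroup SL23) := fun y => by
    rw [eq_comm, MulAction.Quotient.smul_coe, QuotientGroup.eq, smul_eq_mul, mul_assoc]
  by_cases hfix : ∃ x : SL23 ⧸ (P : Subgroup SL23), g • x = x
  swap
  · left
    have : IsEmpty {x : SL23 ⧸ (P : Subgroup SL23) // g • x = x} :=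
      ⟨fun x => hfix ⟨x.1, x.2⟩⟩
    exact Nat.card_of_isEmpty
  right
  obtain ⟨q, hq⟩ := hfix
  obtain ⟨x, rfl⟩ := QuotientGroup.mk_surjective q
  have conj_ne : ∀ y : SL23, y⁻¹ * g * y ≠ 1 := fun y h => hg <| by
    have : g = y * (y⁻¹ * g * y) * y⁻¹ := by group
    rw [this, h]; group
  have hx := (fix_iff x).1 hq
  have g3 : g ^ 3 = 1 := by
    have h : (x⁻¹ * g * x⁻¹⁻¹) ^ 3 = 1 := by simpa using pow_three_of_mem hP hx
    rwa [conj_pow, conj_eq_one_iff] at h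
  have hneg : (x : SL23 ⧸ (P : Subgroup SL23)) ≠ ((-x : SL23) : SL23 ⧸ (P : Subgroup SL23)) := by
    intro h
    have h' := pow_three_of_mem hP (QuotientGroup.eq.1 h)
    rw [mul_neg, inv_mul_cancel] at h'
    revert h'
    decide
  have key : {y : SL23 ⧸ (P : Subgroup SL23) | g • y = y} =
      {(x : SL23 ⧸ (P : Subgroup SL23)), ((-x : SL23) : SL23 ⧸ (P : Subgroup SL23))} := by
    ext q
    obtain ⟨y, rfl⟩ := QuotientGroup.mk_surjective q
    simp only [Set.mem_ofPred_eq, Set.mem_insert_iff, Set.mem_singleton_iff]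
    have hxi : x⁻¹ * g⁻¹ * x ∈ (P : Subgroup SL23) := by
      have := inv_mem hx
      simpa [mul_assoc] using this
    have ni : (-x)⁻¹ = -x⁻¹ := by
      rw [inv_eq_iff_mul_eq_one]; simp
    constructor
    · intro hy
      have hc := mem_order_three hP hx (conj_ne x) ((fix_iff y).1 hy) (conj_ne y)
      have hz : (y * x⁻¹)⁻¹ * g * (y * x⁻¹) = g ∨ (y * x⁻¹)⁻¹ * g * (y * x⁻¹) = g⁻¹ := by
        have e : (y * x⁻¹)⁻¹ * g * (y * x⁻¹) = x * (y⁻¹ * g * y) * x⁻¹ := by group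
        rw [e]
        refine hc.imp (fun h => ?_) (fun h => ?_) <;> rw [h] <;> group
      have hy' : y = (y * x⁻¹) * x := by group
      rw [eq_comm, QuotientGroup.eq, eq_comm (a := (y : SL23 ⧸ (P : Subgroup SL23))),
        QuotientGroup.eq]
      refine (eq_of_conj g g3 hg _ hz).imp (fun h => ?_) (fun h => ?_)
      · rcases h with h | h | h <;> rw [hy', h, ← mul_assoc]
        · simp
        · exact hx
        · exact hxi
      · rw [ni]
        rcases h with h | h | h <;> rw [hy', h, ← mul_assoc, neg_mul_neg]
        · simp
        · exact hx
        · exact hxi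
    · rintro (h | h)
      · rw [h]; exact hq
      · rw [h, fix_iff, ni]
        simpa using hx
  change Nat.card ({y : SL23 ⧸ (P : Subgroup SL23) | g • y = y} : Set _) = 2
  rw [key, Nat.card_coe_set_eq, Set.ncard_pair hneg]
end
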